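/- Let H be a locally indicable group, A a free group with basis 𝒜, and p = v⁻¹gv ∈ A where v and g are written in disjoint subsets of the basis 𝒜, g is cyclically reduced, and g is not a proper power. Let r ∈ A ∗ H be an element that is not conjugate to an element of A, not conjugate to an element of H, and not conjugate to an element of ⟨p⟩ ∗ H. Then the subgroup ⟨p⟩ ∗ H of A ∗ H maps injectively into (A ∗ H)/⟨⟨r⟩⟩ under the canonical map. -/

import Mathlib

open Monoid

/-- A group is locally indicable if every non-trivial finitely generated subgroup
surjects onto `ℤ`. -/
def LocallyIndicable (G : Type) [Group G] : Prop :=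
  ∀ H : Subgroup G, H ≠ ⊥ → H.FG →
    ∃ f : H →* Multiplicative ℤ, Function.Surjective f

/-- The basis letters occurring in the reduced word of an element of a free group. -/
def lettersOf {α : Type} [DecidableEq α] (w : FreeGroup α) : List α :=
  w.toWord.map Prod.fst

/-- An element of a free group is cyclically reduced. -/
def CyclicallyReduced {α : Type} [DecidableEq α] (g : FreeGroup α) : Prop :=
  ∀ (x : α) (b : Bool), g.toWord.head? = some (x, b) → g.toWord.getLast? ≠ some (x, !b)


section LIclosure

lemma normalize_hom {P : Type} [Group P] (f : P →* Multiplicative ℤ) (hf : f ≠ 1) :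
    ∃ (g : P →* Multiplicative ℤ) (d : ℤ), Function.Surjective g ∧ d ≠ 0 ∧
      ∀ x, (f x).toAdd = d * (g x).toAdd := by
  obtain ⟨d0, hd0⟩ := (Subgroup.isCyclic f.range).exists_generator
  obtain ⟨⟨d, ⟨y, hy⟩⟩, hd⟩ : ∃ d : f.range, ∀ x, x ∈ Subgroup.zpowers d := ⟨d0, hd0⟩
  have hdiv : ∀ x, d.toAdd ∣ (f x).toAdd := by
    intro x
    obtain ⟨k, hk⟩ := hd ⟨f x, x, rfl⟩
    have : d ^ k = f x := congrArg Subtype.val hk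
    refine ⟨k, ?_⟩
    rw [← this, toAdd_zpow]; simp [mul_comm]
  have hd0 : d.toAdd ≠ 0 := by
    intro h0
    apply hf
    ext x
    have := hdiv x
    rw [h0] at this
    simpa using this
  refine ⟨MonoidHom.mk' (fun x => Multiplicative.ofAdd ((f x).toAdd / d.toAdd)) ?_, d.toAdd, ?_, hd0, ?_⟩
  · intro a b
    rw [← ofAdd_add, map_mul, toAdd_mul, Int.add_ediv_of_dvd_left (hdiv a)]
  · intro k
    refine ⟨y ^ k.toAdd, ?_⟩
    simp only [MonoidHom.mk'_apply, map_zpow, hy, Int.ediv_self hd0]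
    rw [← ofAdd_zsmul]; simp
  · intro x
    simp only [MonoidHom.mk'_apply, toAdd_ofAdd]
    exact (Int.mul_ediv_cancel' (hdiv x)).symm

lemma LocallyIndicable.exists_hom {G : Type} [Group G] (h : LocallyIndicable G)
    {P : Type} [Group P] [Group.FG P] (i : P →* G) (hi : i ≠ 1) :
    ∃ f : P →* Multiplicative ℤ, Function.Surjective f := by
  have h1 : i.range ≠ ⊥ := by
    intro h2; apply hi; exact MonoidHom.range_eq_bot_iff.1 h2
  have h2 : i.range.FG := by
    rw [← Group.fg_iff_subgroup_fg]
    exact Group.fg_range i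
  obtain ⟨f, hf⟩ := h _ h1 h2
  exact ⟨f.comp i.rangeRestrict, hf.comp i.rangeRestrict_surjective⟩

lemma LocallyIndicable.of_exists {G : Type} [Group G]
    (h : ∀ P : Subgroup G, P ≠ ⊥ → Group.FG P → ∃ f : P →* Multiplicative ℤ, f ≠ 1) :
    LocallyIndicable G := by
  intro P hP hfg
  obtain ⟨f, hf⟩ := h P hP ((Group.fg_iff_subgroup_fg P).2 hfg)
  obtain ⟨g, d, hg, -⟩ := normalize_hom f hf
  exact ⟨g, hg⟩

lemma surj_ne_one {P : Type} [Group P] {f : P →* Multiplicative ℤ} (hf : Function.Surjective f) :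
    f ≠ 1 := by
  rintro rfl
  obtain ⟨x, hx⟩ := hf (Multiplicative.ofAdd 1)
  have := congrArg Multiplicative.toAdd hx
  simp at this

lemma subtype_ne_one {G : Type} [Group G] {P : Subgroup G} (hP : P ≠ ⊥) : P.subtype ≠ 1 := by
  intro h; apply hP
  have := MonoidHom.range_eq_bot_iff.2 h
  rwa [Subgroup.range_subtype] at this

lemma LocallyIndicable.of_ext {G K : Type} [Group G] [Group K] (f : G →* K)
    (hK : LocallyIndicable K) (hk : LocallyIndicable f.ker) : LocallyIndicable G := by
  apply LocallyIndicable.of_exists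
  intro P hP hfg
  by_cases h : f.comp P.subtype = 1
  · have hx : ∀ x : P, (x : G) ∈ f.ker := fun x => DFunLike.congr_fun h x
    obtain ⟨g, hg⟩ := hk.exists_hom (P.subtype.codRestrict f.ker hx) (by
      intro h1
      apply subtype_ne_one hP
      ext x
      exact congrArg Subtype.val (DFunLike.congr_fun h1 x))
    exact ⟨g, surj_ne_one hg⟩
  · obtain ⟨g, hg⟩ := hK.exists_hom _ h
    exact ⟨g, surj_ne_one hg⟩

lemma LocallyIndicable.of_injective {G K : Type} [Group G] [Group K] (f : G →* K)
    (hf : Function.Injective f) (hK : LocallyIndicable K) : LocallyIndicable G := by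
  apply LocallyIndicable.of_exists
  intro P hP hfg
  obtain ⟨g, hg⟩ := hK.exists_hom (f.comp P.subtype) (by
    intro h1
    apply subtype_ne_one hP
    ext x
    exact hf ((DFunLike.congr_fun h1 x).trans (map_one f).symm))
  exact ⟨g, surj_ne_one hg⟩

lemma LocallyIndicable.subgroup {G : Type} [Group G] (h : LocallyIndicable G) (P : Subgroup G) :
    LocallyIndicable P := h.of_injective P.subtype P.subtype_injective

lemma LocallyIndicable.prod {G K : Type} [Group G] [Group K] (hG : LocallyIndicable G)
    (hK : LocallyIndicable K) : LocallyIndicable (G × K) := by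
  refine LocallyIndicable.of_ext (MonoidHom.fst G K) hG ?_
  refine LocallyIndicable.of_injective ((MonoidHom.snd G K).comp (Subgroup.subtype _)) ?_ hK
  rintro ⟨⟨a, b⟩, h⟩ ⟨⟨c, d⟩, h'⟩ h3
  have h1 : a = 1 := h
  have h2 : c = 1 := h'
  have h4 : b = d := h3
  simp [h1, h2, h4]

lemma locallyIndicable_freeGroup (α : Type) : LocallyIndicable (FreeGroup α) := by
  apply LocallyIndicable.of_exists
  intro P hP hfg
  haveI : IsFreeGroup P := inferInstance
  let e := IsFreeGroup.toFreeGroup P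
  by_cases hne : Nonempty (IsFreeGroup.Generators P)
  · obtain ⟨x⟩ := hne
    refine ⟨(FreeGroup.lift (fun _ => Multiplicative.ofAdd (1:ℤ))).comp e.toMonoidHom, ?_⟩
    intro h
    have := DFunLike.congr_fun h (e.symm (FreeGroup.of x))
    simp only [MonoidHom.comp_apply, MulEquiv.coe_toMonoidHom, MulEquiv.apply_symm_apply,
      FreeGroup.lift_apply_of, MonoidHom.one_apply] at this
    have := congrArg Multiplicative.toAdd this
    simp at this
  · exfalso
    apply hP
    rw [not_nonempty_iff] at hne
    rw [Subgroup.eq_bot_iff_forall]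
    intro x hx
    have : e ⟨x, hx⟩ = e 1 := Subsingleton.elim _ _
    exact congrArg Subtype.val (e.injective this)

lemma LocallyIndicable.semidirect {N C : Type} [Group N] [Group C] (φ : C →* MulAut N)
    (hN : LocallyIndicable N) (hC : LocallyIndicable C) : LocallyIndicable (N ⋊[φ] C) := by
  refine LocallyIndicable.of_ext (SemidirectProduct.rightHom) hC ?_
  refine LocallyIndicable.of_injective (MonoidHom.mk' (fun x => x.1.left) ?_) ?_ hN
  · rintro ⟨a, ha⟩ ⟨b, hb⟩
    have : a.right = 1 := ha
    simp [this]
  · rintro ⟨a, ha⟩ ⟨b, hb⟩ h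
    have h1 : a.right = 1 := ha
    have h2 : b.right = 1 := hb
    apply Subtype.ext
    exact SemidirectProduct.ext h (h1.trans h2.symm)

open Classical in
lemma locallyIndicable_coprodI (I C : Type) [Group C] (hC : LocallyIndicable C) :
    LocallyIndicable (CoprodI (fun _ : I => C)) := by
  let X : I → C → FreeGroup (I × C) := fun i c => if c = 1 then 1 else FreeGroup.of (i, c)
  have hX1 : ∀ i, X i 1 = 1 := fun i => by simp [X]
  let act : C → FreeGroup (I × C) →* FreeGroup (I × C) := fun c => FreeGroup.lift (fun p => if p.2 = 1 then FreeGroup.of p else (X p.1 c)⁻¹ * X p.1 (c * p.2))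
  have hact : ∀ c i b, act c (X i b) = (X i c)⁻¹ * X i (c * b) := by
    intro c i b
    by_cases hb : b = 1
    · subst hb; simp [hX1]
    · have : X i b = FreeGroup.of (i, b) := by simp [X, hb]
      rw [this]; simp [act, hb]
  have hof : ∀ p : I × C, p.2 = 1 ∨ FreeGroup.of p = X p.1 p.2 := by
    intro p
    by_cases hb : p.2 = 1
    · exact Or.inl hb
    · right; simp [X, hb]
  have hact0 : ∀ c (p : I × C), p.2 = 1 → act c (FreeGroup.of p) = FreeGroup.of p := by
    intro c p hp; simp [act, hp]
  have hact1 : act 1 = MonoidHom.id (FreeGroup (I × C)) := by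
    apply FreeGroup.ext_hom
    intro p
    rcases hof p with h | h
    · rw [hact0 _ _ h]; rfl
    · rw [h, hact]; simp [hX1]
  have hactm : ∀ c d, act (c * d) = (act c).comp (act d) := by
    intro c d
    apply FreeGroup.ext_hom
    intro p
    rcases hof p with h | h
    · rw [hact0 _ _ h, MonoidHom.comp_apply, hact0 _ _ h, hact0 _ _ h]
    · rw [h, MonoidHom.comp_apply, hact, hact, map_mul, map_inv, hact, hact]
      simp [mul_assoc]
  let φ : C →* MulAut (FreeGroup (I × C)) := MonoidHom.mk' (fun c => MonoidHom.toMulEquiv (act c) (act c⁻¹)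
      (by rw [← hactm, inv_mul_cancel, hact1]) (by rw [← hactm, mul_inv_cancel, hact1])) (by
        intro a b
        ext x
        exact DFunLike.congr_fun (hactm a b) x)
  have hφ : ∀ c x, φ c x = act c x := fun _ _ => rfl
  let Φ : CoprodI (fun _ : I => C) →* (FreeGroup (I × C)) ⋊[φ] C := CoprodI.lift (fun i =>
    MonoidHom.mk' (fun c => (⟨X i c, c⟩ : (FreeGroup (I × C)) ⋊[φ] C)) (by
      intro a b
      apply SemidirectProduct.ext
      · simp [hφ, hact]
      · simp))
  let L : FreeGroup (I × C) →* CoprodI (fun _ : I => C) := FreeGroup.lift (fun p => if p.2 = 1 then 1 else CoprodI.of (i := p.1) p.2)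
  have hL : ∀ i c, L (X i c) = CoprodI.of (M := fun _ : I => C) (i := i) c := by
    intro i c
    by_cases hc : c = 1
    · subst hc; simp [hX1]
    · have : X i c = FreeGroup.of (i, c) := by simp [X, hc]
      rw [this]; simp [L, hc]
  let Ψ : (FreeGroup (I × C)) ⋊[φ] C →* CoprodI (fun _ : I => C) := SemidirectProduct.lift L 1 (by
    intro c
    apply FreeGroup.ext_hom
    intro p
    rcases hof p with h | h
    · simp [hφ, hact0 _ _ h]
    · simp [h, hφ, hact, hL])
  have hcomp : Ψ.comp Φ = MonoidHom.id _ := by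
    apply CoprodI.ext_hom
    intro i
    ext c
    simp [Φ, Ψ, SemidirectProduct.lift, hL]
  refine LocallyIndicable.of_injective Φ ?_ (LocallyIndicable.semidirect φ (locallyIndicable_freeGroup _) hC)
  exact Function.LeftInverse.injective (g := Ψ) (fun x => DFunLike.congr_fun hcomp x)

lemma LocallyIndicable.coprod {A B : Type} [Group A] [Group B] (hA : LocallyIndicable A)
    (hB : LocallyIndicable B) : LocallyIndicable (Coprod A B) := by
  let Φ : Coprod A B →* CoprodI (fun _ : Bool => A × B) :=
    Coprod.lift ((CoprodI.of (M := fun _ : Bool => A × B) (i := true)).comp (MonoidHom.inl A B))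
      ((CoprodI.of (M := fun _ : Bool => A × B) (i := false)).comp (MonoidHom.inr A B))
  let Ψ : CoprodI (fun _ : Bool => A × B) →* Coprod A B :=
    CoprodI.lift (fun b => match b with
      | true => Coprod.inl.comp (MonoidHom.fst A B)
      | false => Coprod.inr.comp (MonoidHom.snd A B))
  have hcomp : Ψ.comp Φ = MonoidHom.id _ := by
    apply Coprod.hom_ext <;> ext c <;> simp [Φ, Ψ]
  refine LocallyIndicable.of_injective Φ ?_ (locallyIndicable_coprodI Bool (A × B) (hA.prod hB))
  exact Function.LeftInverse.injective (g := Ψ) (fun x => DFunLike.congr_fun hcomp x)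

lemma locallyIndicable_int : LocallyIndicable (Multiplicative ℤ) := by
  apply LocallyIndicable.of_exists
  intro P hP _
  exact ⟨P.subtype, subtype_ne_one hP⟩

end LIclosure

section Amalgams

/-- The two-member family with members `A` and `B`. -/
def TwoFam (A B : Type) : Bool → Type
  | true => A
  | false => B

instance TwoFam.group (A B : Type) [Group A] [Group B] : ∀ b, Group (TwoFam A B b)
  | true => inferInstanceAs (Group A)
  | false => inferInstanceAs (Group B)

lemma exists_amalgam {C A B : Type} [Group C] [Group A] [Group B] (f : C →* A) (g : C →* B)
    (hf : Function.Injective f) (hg : Function.Injective g) :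
    ∃ (Δ : Type) (_ : Group Δ) (i : A →* Δ) (k : B →* Δ), Function.Injective i ∧
      Function.Injective k ∧ ∀ c, i (f c) = k (g c) := by
  let φ : ∀ b, C →* TwoFam A B b := fun b => match b with
    | true => f
    | false => g
  have hφ : ∀ b, Function.Injective (φ b) := by
    intro b
    cases b
    · exact hg
    · exact hf
  refine ⟨PushoutI φ, inferInstance, (PushoutI.of (φ := φ) true), (PushoutI.of (φ := φ) false),
    PushoutI.of_injective hφ true, PushoutI.of_injective hφ false, ?_⟩
  intro c
  exact (PushoutI.of_apply_eq_base φ true c).trans (PushoutI.of_apply_eq_base φ false c).symm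

lemma coprod_map_injective {C A H : Type} [Group C] [Group A] [Group H] (f : C →* A)
    (hf : Function.Injective f) : Function.Injective (Coprod.map f (MonoidHom.id H)) := by
  obtain ⟨Δ, _, i, k, hi, hk, h⟩ := exists_amalgam (Coprod.inl : C →* Coprod C H) f
    Coprod.inl_injective hf
  have : (Coprod.lift k (i.comp Coprod.inr)).comp (Coprod.map f (MonoidHom.id H)) = i := by
    apply Coprod.hom_ext
    · ext c; simp [h]
    · ext c; simp
  have h2 : Function.Injective ((Coprod.lift k (i.comp Coprod.inr)).comp (Coprod.map f (MonoidHom.id H))) := by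
    rw [this]; exact hi
  exact Function.Injective.of_comp h2

/-- The alternating product of a list of pairs. -/
def altProd {A B G : Type} [Group A] [Group B] [Group G] (α : A →* G) (β : B →* G)
    (l : List (A × B)) : G := (l.map (fun x => α x.1 * β x.2)).prod

@[simp] lemma altProd_nil {A B G : Type} [Group A] [Group B] [Group G] (α : A →* G) (β : B →* G) :
    altProd α β [] = 1 := rfl

@[simp] lemma altProd_cons {A B G : Type} [Group A] [Group B] [Group G] (α : A →* G) (β : B →* G)
    (x : A × B) (l : List (A × B)) : altProd α β (x :: l) = α x.1 * β x.2 * altProd α β l := by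
  simp [altProd]

lemma altProd_append {A B G : Type} [Group A] [Group B] [Group G] (α : A →* G) (β : B →* G)
    (l l' : List (A × B)) : altProd α β (l ++ l') = altProd α β l * altProd α β l' := by
  simp [altProd]

lemma map_altProd {A B G K : Type} [Group A] [Group B] [Group G] [Group K] (α : A →* G)
    (β : B →* G) (f : G →* K) (l : List (A × B)) :
    f (altProd α β l) = altProd (f.comp α) (f.comp β) l := by
  induction l with
  | nil => simp
  | cons x l ih => simp [ih]

lemma altProd_ne_one {A B : Type} [Group A] [Group B] (l : List (A × B))
    (hl : ∀ x ∈ l, x.1 ≠ 1 ∧ x.2 ≠ 1) (a : A) (ha : a ≠ 1) :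
    altProd (Coprod.inl : A →* Coprod A B) Coprod.inr l * Coprod.inl a ≠ 1 := by
  let T : Coprod A B →* CoprodI (TwoFam A B) :=
    Coprod.lift (CoprodI.of (M := TwoFam A B) (i := true)) (CoprodI.of (M := TwoFam A B) (i := false))
  have hTl : ∀ (x : A) (hx : x ≠ 1), (CoprodI.NeWord.singleton (M := TwoFam A B) (i := true) x hx).prod
      = T (Coprod.inl x) := fun x hx => CoprodI.NeWord.prod_singleton (M := TwoFam A B) (i := true) x hx
  have hTr : ∀ (x : B) (hx : x ≠ 1), (CoprodI.NeWord.singleton (M := TwoFam A B) (i := false) x hx).prod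
      = T (Coprod.inr x) := fun x hx => CoprodI.NeWord.prod_singleton (M := TwoFam A B) (i := false) x hx
  have key : ∃ w : CoprodI.NeWord (TwoFam A B) true true, w.prod =
      T (altProd (Coprod.inl : A →* Coprod A B) Coprod.inr l * Coprod.inl a) := by
    induction l with
    | nil =>
      refine ⟨CoprodI.NeWord.singleton (M := TwoFam A B) (i := true) a ha, ?_⟩
      rw [hTl]; simp
    | cons x l ih =>
      obtain ⟨w, hw⟩ := ih (fun y hy => hl y (List.mem_cons_of_mem _ hy))
      have hx := hl x List.mem_cons_self
      refine ⟨CoprodI.NeWord.append (CoprodI.NeWord.append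
        (CoprodI.NeWord.singleton (M := TwoFam A B) (i := true) x.1 hx.1) (by decide)
        (CoprodI.NeWord.singleton (M := TwoFam A B) (i := false) x.2 hx.2)) (by decide) w, ?_⟩
      rw [CoprodI.NeWord.append_prod, CoprodI.NeWord.append_prod, hw, hTl, hTr]
      simp [mul_assoc]
  obtain ⟨w, hw⟩ := key
  intro h
  rw [h, map_one] at hw
  have h1 : w.toWord = CoprodI.Word.empty := by
    classical
    apply (CoprodI.Word.equiv (M := TwoFam A B)).symm.injective
    change w.toWord.prod = CoprodI.Word.prod CoprodI.Word.empty
    rw [CoprodI.Word.prod_empty]; exact hw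
  have h2 := congrArg CoprodI.Word.toList h1
  exact w.toList_ne_nil h2

end Amalgams

section Crossed

/-- Right translation of functions. -/
def transAct (G Θ : Type) [Group G] [Group Θ] : G →* MulAut (G → Θ) where
  toFun u :=
    { toFun := fun F g => F (g * u)
      invFun := fun F g => F (g * u⁻¹)
      left_inv := fun F => by funext g; simp
      right_inv := fun F => by funext g; simp
      map_mul' := fun F F' => rfl }
  map_one' := by ext F g; simp
  map_mul' u v := by ext F g; simp [mul_assoc]

lemma transAct_apply (G Θ : Type) [Group G] [Group Θ] (u : G) (F : G → Θ) (g : G) :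
    transAct G Θ u F g = F (g * u) := rfl

variable {S β : Type} [Group S]

lemma exists_crossed {Θ : Type} [Group Θ] (τ : Coprod S (FreeGroup β) → S → Θ)
    (hτ : ∀ g s s', τ g (s * s') = τ g s * τ (g * Coprod.inl s) s')
    (φ : Coprod S (FreeGroup β) → β → Θ) :
    ∃ Φ : Coprod S (FreeGroup β) → Coprod S (FreeGroup β) → Θ,
      (∀ g u v, Φ g (u * v) = Φ g u * Φ (g * u) v) ∧ (∀ g s, Φ g (Coprod.inl s) = τ g s) ∧
      ∀ g x, Φ g (Coprod.inr (FreeGroup.of x)) = φ g x := by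
  let T := (Coprod S (FreeGroup β) → Θ) ⋊[transAct (Coprod S (FreeGroup β)) Θ] Coprod S (FreeGroup β)
  let f1 : S →* T := MonoidHom.mk' (fun s => ⟨fun g => τ g s, Coprod.inl s⟩) (by
    intro s s'
    apply SemidirectProduct.ext
    · funext g
      exact hτ g s s'
    · exact map_mul _ _ _)
  let f2 : FreeGroup β →* T := FreeGroup.lift (fun x => ⟨fun g => φ g x, Coprod.inr (FreeGroup.of x)⟩)
  let h : Coprod S (FreeGroup β) →* T := Coprod.lift f1 f2
  have hr : SemidirectProduct.rightHom.comp h = MonoidHom.id _ := by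
    apply Coprod.hom_ext
    · ext s; rfl
    · apply FreeGroup.ext_hom; intro x
      change SemidirectProduct.rightHom (f2 (FreeGroup.of x)) = Coprod.inr (FreeGroup.of x)
      simp only [f2, FreeGroup.lift_apply_of]; rfl
  have hr' : ∀ u, (h u).right = u := fun u => DFunLike.congr_fun hr u
  refine ⟨fun g u => (h u).left g, ?_, ?_, ?_⟩
  · intro g u v
    beta_reduce
    rw [map_mul, SemidirectProduct.mul_left, Pi.mul_apply, transAct_apply, hr']
  · intro g s; rfl
  · intro g x
    change (f2 (FreeGroup.of x)).left g = _
    simp only [f2, FreeGroup.lift_apply_of]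

lemma crossed_ext {Θ : Type} [Group Θ]
    {Φ Ψ : Coprod S (FreeGroup β) → Coprod S (FreeGroup β) → Θ}
    (hΦ : ∀ g u v, Φ g (u * v) = Φ g u * Φ (g * u) v)
    (hΨ : ∀ g u v, Ψ g (u * v) = Ψ g u * Ψ (g * u) v)
    (h1 : ∀ g s, Φ g (Coprod.inl s) = Ψ g (Coprod.inl s))
    (h2 : ∀ g x, Φ g (Coprod.inr (FreeGroup.of x)) = Ψ g (Coprod.inr (FreeGroup.of x))) :
    Φ = Ψ := by
  let T := (Coprod S (FreeGroup β) → Θ) ⋊[transAct (Coprod S (FreeGroup β)) Θ] Coprod S (FreeGroup β)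
  let mk : ∀ (Φ : Coprod S (FreeGroup β) → Coprod S (FreeGroup β) → Θ)
    (_ : ∀ g u v, Φ g (u * v) = Φ g u * Φ (g * u) v), Coprod S (FreeGroup β) →* T := fun Φ hΦ =>
    MonoidHom.mk' (fun u => ⟨fun g => Φ g u, u⟩) (by
      intro u v
      apply SemidirectProduct.ext
      · funext g
        exact hΦ g u v
      · rfl)
  have : mk Φ hΦ = mk Ψ hΨ := by
    apply Coprod.hom_ext
    · refine MonoidHom.ext fun s => ?_
      apply SemidirectProduct.ext
      · funext g; exact h1 g s
      · rfl
    · apply FreeGroup.ext_hom; intro x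
      apply SemidirectProduct.ext
      · funext g; exact h2 g x
      · rfl
  funext g u
  have h3 := congrArg SemidirectProduct.left (DFunLike.congr_fun this u)
  exact congrFun h3 g

lemma exists_crossedQ (φ : Coprod S (FreeGroup β) → β → ℚ) :
    ∃ Φ : Coprod S (FreeGroup β) → Coprod S (FreeGroup β) → ℚ,
      (∀ g u v, Φ g (u * v) = Φ g u + Φ (g * u) v) ∧ (∀ g s, Φ g (Coprod.inl s) = 0) ∧
      ∀ g x, Φ g (Coprod.inr (FreeGroup.of x)) = φ g x := by
  obtain ⟨Φ, h1, h2, h3⟩ := exists_crossed (S := S) (β := β) (Θ := Multiplicative ℚ) (fun _ _ => 1)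
    (by simp) (fun g x => Multiplicative.ofAdd (φ g x))
  refine ⟨fun g u => (Φ g u).toAdd, ?_, ?_, ?_⟩
  · intro g u v; beta_reduce; rw [h1]; rfl
  · intro g s; beta_reduce; rw [h2]; rfl
  · intro g x; beta_reduce; rw [h3]; rfl

/-- The rational crossed function determined by its values on letters. -/
noncomputable def QF (φ : Coprod S (FreeGroup β) → β → ℚ) :
    Coprod S (FreeGroup β) → Coprod S (FreeGroup β) → ℚ := (exists_crossedQ φ).choose

lemma QF_mul (φ : Coprod S (FreeGroup β) → β → ℚ) (g u v : Coprod S (FreeGroup β)) :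
    QF φ g (u * v) = QF φ g u + QF φ (g * u) v := (exists_crossedQ φ).choose_spec.1 g u v

lemma QF_inl (φ : Coprod S (FreeGroup β) → β → ℚ) (g : Coprod S (FreeGroup β)) (s : S) :
    QF φ g (Coprod.inl s) = 0 := (exists_crossedQ φ).choose_spec.2.1 g s

lemma QF_inr (φ : Coprod S (FreeGroup β) → β → ℚ) (g : Coprod S (FreeGroup β)) (x : β) :
    QF φ g (Coprod.inr (FreeGroup.of x)) = φ g x := (exists_crossedQ φ).choose_spec.2.2 g x

lemma QF_ext (φ : Coprod S (FreeGroup β) → β → ℚ)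
    (Ψ : Coprod S (FreeGroup β) → Coprod S (FreeGroup β) → ℚ)
    (hΨ : ∀ g u v, Ψ g (u * v) = Ψ g u + Ψ (g * u) v)
    (h1 : ∀ g s, Ψ g (Coprod.inl s) = 0)
    (h2 : ∀ g x, Ψ g (Coprod.inr (FreeGroup.of x)) = φ g x) : QF φ = Ψ := by
  have := crossed_ext (Θ := Multiplicative ℚ) (Φ := fun g u => Multiplicative.ofAdd (QF φ g u))
    (Ψ := fun g u => Multiplicative.ofAdd (Ψ g u))
    (by intro g u v; rw [QF_mul]; rfl) (by intro g u v; rw [hΨ]; rfl)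
    (by intro g s; rw [QF_inl, h1]) (by intro g x; rw [QF_inr, h2])
  funext g u
  exact congrFun (congrFun this g) u

lemma QF_add (φ ψ : Coprod S (FreeGroup β) → β → ℚ) (g u : Coprod S (FreeGroup β)) :
    QF (fun g x => φ g x + ψ g x) g u = QF φ g u + QF ψ g u := by
  rw [QF_ext (fun g x => φ g x + ψ g x) (fun g u => QF φ g u + QF ψ g u)]
  · intro g u v; simp only [QF_mul]; ring
  · intro g s; simp [QF_inl]
  · intro g s; simp [QF_inr]

lemma QF_smul (c : ℚ) (φ : Coprod S (FreeGroup β) → β → ℚ) (g u : Coprod S (FreeGroup β)) :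
    QF (fun g x => c * φ g x) g u = c * QF φ g u := by
  rw [QF_ext (fun g x => c * φ g x) (fun g u => c * QF φ g u)]
  · intro g u v; simp only [QF_mul]; ring
  · intro g s; simp [QF_inl]
  · intro g s; simp [QF_inr]

lemma QF_sum {K : Type} (s : Finset K) (φ : K → Coprod S (FreeGroup β) → β → ℚ)
    (g u : Coprod S (FreeGroup β)) :
    QF (fun g x => ∑ k ∈ s, φ k g x) g u = ∑ k ∈ s, QF (φ k) g u := by
  rw [QF_ext (fun g x => ∑ k ∈ s, φ k g x) (fun g u => ∑ k ∈ s, QF (φ k) g u)]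
  · intro g u v; simp only [QF_mul, Finset.sum_add_distrib]
  · intro g s; simp [QF_inl]
  · intro g s; simp [QF_inr]

lemma QF_trans (φ : Coprod S (FreeGroup β) → β → ℚ) (h g u : Coprod S (FreeGroup β)) :
    QF φ (h * g) u = QF (fun g x => φ (h * g) x) g u := by
  rw [QF_ext (fun g x => φ (h * g) x) (fun g u => QF φ (h * g) u)]
  · intro g u v; simp only [QF_mul, mul_assoc]
  · intro g s; simp [QF_inl]
  · intro g s; simp [QF_inr]

lemma QF_inv (φ : Coprod S (FreeGroup β) → β → ℚ) (h : Coprod S (FreeGroup β))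
    (hh : ∀ g x, φ (h * g) x = φ g x) (g u : Coprod S (FreeGroup β)) :
    QF φ (h * g) u = QF φ g u := by
  rw [QF_trans]; simp only [hh]

lemma QF_one (φ : Coprod S (FreeGroup β) → β → ℚ) (g : Coprod S (FreeGroup β)) :
    QF φ g 1 = 0 := by
  have := QF_mul φ g 1 1
  simpa using this

lemma QF_const (E : FreeGroup β →* Multiplicative ℚ) (g u : Coprod S (FreeGroup β)) :
    QF (S := S) (fun _ x => (E (FreeGroup.of x)).toAdd) g u = (E (Coprod.snd u)).toAdd := by
  rw [QF_ext _ (fun g u => (E (Coprod.snd u)).toAdd)]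
  · intro g u v; simp
  · intro g s; simp
  · intro g s; simp

lemma QF_conj (φ : Coprod S (FreeGroup β) → β → ℚ) (g R : Coprod S (FreeGroup β))
    (hh : ∀ k x, φ (g * R * g⁻¹ * k) x = φ k x) :
    QF φ 1 (g * R * g⁻¹) = QF φ g R := by
  have h1 := QF_one φ 1
  rw [← mul_inv_cancel g, QF_mul] at h1
  rw [QF_mul, QF_mul]
  have h2 := QF_inv φ _ hh g g⁻¹
  rw [inv_mul_cancel_right] at h2
  simp only [one_mul, mul_inv_cancel] at h1 h2 ⊢
  rw [h2]; linarith

end Crossed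

section TheoremH

lemma rat_to_int {P : Type} [Group P] [hP : Group.FG P] (F : P →* Multiplicative ℚ) (hF : F ≠ 1) :
    ∃ (f : P →* Multiplicative ℤ) (q : ℚ), Function.Surjective f ∧ q ≠ 0 ∧
      ∀ x, (F x).toAdd = q * ((f x).toAdd : ℚ) := by
  obtain ⟨T, hT⟩ := hP.out
  let N : ℕ := ∏ s ∈ T, (F s).toAdd.den
  have hN : (N : ℚ) ≠ 0 := by
    have : N ≠ 0 := Finset.prod_ne_zero_iff.2 (fun s _ => (F s).toAdd.den_nz)
    exact_mod_cast this
  have hintk : ∀ x, ∃ k : ℤ, (N : ℚ) * (F x).toAdd = k := by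
    intro x
    have hx : x ∈ Subgroup.closure (T : Set P) := by rw [hT]; trivial
    induction hx using Subgroup.closure_induction with
    | mem y hy =>
      have hy' : y ∈ T := hy
      obtain ⟨c, hc⟩ := Finset.dvd_prod_of_mem (fun s => (F s).toAdd.den) hy'
      refine ⟨c * (F y).toAdd.num, ?_⟩
      have h1 : N = (F y).toAdd.den * c := hc
      rw [h1]
      push_cast
      have h2 := Rat.den_mul_eq_num (F y).toAdd
      linear_combination (c : ℚ) * h2
    | one => exact ⟨0, by simp⟩
    | mul a b _ _ ha hb =>
      obtain ⟨k, hk⟩ := ha; obtain ⟨l, hl⟩ := hb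
      refine ⟨k + l, ?_⟩
      rw [map_mul, toAdd_mul]; push_cast; linear_combination hk + hl
    | inv a _ ha =>
      obtain ⟨k, hk⟩ := ha
      refine ⟨-k, ?_⟩
      rw [map_inv, toAdd_inv]; push_cast; linear_combination -hk
  choose k hk using hintk
  let f0 : P →* Multiplicative ℤ := MonoidHom.mk' (fun x => Multiplicative.ofAdd (k x)) (by
    intro a b
    rw [← ofAdd_add]
    congr 1
    have : ((k (a * b) : ℤ) : ℚ) = ((k a + k b : ℤ) : ℚ) := by
      push_cast
      rw [← hk, ← hk, ← hk, map_mul, toAdd_mul]; ring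
    exact_mod_cast this)
  have hf0 : f0 ≠ 1 := by
    intro h
    apply hF
    ext x
    have h1 : k x = 0 := congrArg Multiplicative.toAdd (DFunLike.congr_fun h x)
    have h2 := hk x
    rw [h1] at h2
    simp [hN] at h2
    simp [h2]
  obtain ⟨g, d, hg, hd, hgd⟩ := normalize_hom f0 hf0
  refine ⟨g, d / N, hg, by positivity, ?_⟩
  intro x
  have h1 : k x = d * (g x).toAdd := hgd x
  have h2 := hk x
  rw [h1] at h2
  push_cast at h2
  field_simp
  linear_combination h2

variable {S β : Type} [Group S]

open Classical in
lemma exists_retraction (P : Subgroup (Coprod S (FreeGroup β))) :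
    ∃ ρ : P →* (P.comap (Coprod.inl : S →* Coprod S (FreeGroup β))),
      ∀ (d : S) (hd : Coprod.inl d ∈ P), ρ ⟨Coprod.inl d, hd⟩ = ⟨d, hd⟩ := by
  let D := P.comap (Coprod.inl : S →* Coprod S (FreeGroup β))
  let T : Coprod S (FreeGroup β) → Set S := fun g => {s | g * (Coprod.inl s)⁻¹ ∈ P}
  let pick : Set S → S := fun U => if 1 ∈ U then 1 else if h : U.Nonempty then h.some else 1
  have hpick : ∀ U : Set S, U.Nonempty → pick U ∈ U := by
    intro U hU
    by_cases h1 : 1 ∈ U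
    · simp [pick, h1]
    · simp only [pick, h1, hU, if_false, dif_pos]; exact hU.some_mem
  have hTx : ∀ x ∈ P, ∀ g, T (x * g) = T g := by
    intro x hx g
    ext s
    change x * g * (Coprod.inl s)⁻¹ ∈ P ↔ g * (Coprod.inl s)⁻¹ ∈ P
    rw [mul_assoc, Subgroup.mul_mem_cancel_left _ hx]
  have hTs : ∀ g s, (T (g * Coprod.inl s)).Nonempty ↔ (T g).Nonempty := by
    intro g s
    constructor
    · rintro ⟨u, hu⟩
      refine ⟨u * s⁻¹, ?_⟩
      change _ ∈ P
      have : g * Coprod.inl s * (Coprod.inl u)⁻¹ ∈ P := hu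
      simpa [mul_assoc] using this
    · rintro ⟨u, hu⟩
      refine ⟨u * s, ?_⟩
      change _ ∈ P
      have : g * (Coprod.inl u)⁻¹ ∈ P := hu
      simpa [mul_assoc] using this
  have hmem : ∀ g s, (T g).Nonempty → pick (T g) * s * (pick (T (g * Coprod.inl s)))⁻¹ ∈ D := by
    intro g s hg
    have h1 : g * (Coprod.inl (pick (T g)))⁻¹ ∈ P := hpick _ hg
    have h2 : g * Coprod.inl s * (Coprod.inl (pick (T (g * Coprod.inl s))))⁻¹ ∈ P := hpick _ ((hTs g s).2 hg)
    change Coprod.inl (pick (T g) * s * (pick (T (g * Coprod.inl s)))⁻¹) ∈ P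
    have h3 := P.mul_mem (P.inv_mem h1) h2
    simpa [mul_assoc] using h3
  let τ : Coprod S (FreeGroup β) → S → D := fun g s =>
    if h : (T g).Nonempty then ⟨_, hmem g s h⟩ else 1
  have hτ : ∀ g s s', τ g (s * s') = τ g s * τ (g * Coprod.inl s) s' := by
    intro g s s'
    by_cases h : (T g).Nonempty
    · have h' := (hTs g s).2 h
      simp only [τ, h, h', dif_pos]
      apply Subtype.ext
      simp [mul_assoc]
    · have h' : ¬ (T (g * Coprod.inl s)).Nonempty := fun h2 => h ((hTs g s).1 h2)
      simp only [τ, h, h', dif_neg, not_false_eq_true]; simp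
  obtain ⟨Φ, h1, h2, h3⟩ := exists_crossed τ hτ (fun _ _ => 1)
  have hinv : ∀ x ∈ P, ∀ g u, Φ (x * g) u = Φ g u := by
    intro x hx g u
    have : (fun g u => Φ (x * g) u) = Φ := by
      apply crossed_ext (Φ := fun g u => Φ (x * g) u) (Ψ := Φ) _ h1
      · intro g s
        rw [h2, h2]
        have e1 := hTx x hx g
        have e2 := hTx x hx (g * Coprod.inl s)
        rw [← mul_assoc] at e2
        simp only [τ]
        by_cases h : (T g).Nonempty
        · have h' : (T (x * g)).Nonempty := by rw [e1]; exact h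
          simp only [h, h', dif_pos]
          apply Subtype.ext
          simp only [e1, e2]
        · have h' : ¬ (T (x * g)).Nonempty := by rw [e1]; exact h
          simp only [h, h', dif_neg, not_false_eq_true]
      · intro g y; rw [h3, h3]
      · intro g u v
        rw [h1, mul_assoc]
    exact congrFun (congrFun this g) u
  refine ⟨MonoidHom.mk' (fun x => Φ 1 x) ?_, ?_⟩
  · intro a b
    have := hinv a a.2 1 b
    rw [mul_one] at this
    change Φ 1 (a * b : Coprod S (FreeGroup β)) = _
    rw [h1, one_mul, this]
  · intro d hd
    change Φ 1 (Coprod.inl d) = _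
    rw [h2]
    have hne : (1 : S) ∈ T 1 := by
      change _ ∈ P
      simp [P.one_mem]
    have hp : pick (T 1) = 1 := by simp [pick, hne]
    have hp2 : T (1 * Coprod.inl d) = T 1 := by
      have := hTx _ hd 1
      rwa [mul_one] at this
    have h : (T 1).Nonempty := ⟨1, hne⟩
    simp only [τ, h, dif_pos]
    apply Subtype.ext
    simp only [hp2, hp]; simp

end TheoremH

section TheoremH2

variable {S β ι J : Type} [Group S]

/-- Two conjugates are related when they come from the same relator and the same coset. -/
def RelP (idx : J → ι) (g : J → Coprod S (FreeGroup β)) (P : Subgroup (Coprod S (FreeGroup β)))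
    (j k : J) : Prop := idx j = idx k ∧ g j * (g k)⁻¹ ∈ P

/-- Independence of a finite family of conjugated relators relative to a subgroup. -/
def IndP (R : ι → Coprod S (FreeGroup β)) (idx : J → ι) (g : J → Coprod S (FreeGroup β))
    (P : Subgroup (Coprod S (FreeGroup β))) : Prop :=
  ∀ d : J → ℚ, (∀ j k, RelP idx g P j k → d j = d k) →
    ∃ φ : Coprod S (FreeGroup β) → β → ℚ, (∀ x ∈ P, ∀ h y, φ (x * h) y = φ h y) ∧
      ∀ j, QF φ (g j) (R (idx j)) = d j

lemma exists_theta (P1 : Subgroup (Coprod S (FreeGroup β))) (f : P1 →* Multiplicative ℤ) :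
    ∃ θ : Coprod S (FreeGroup β) → ℤ, ∀ (x : P1) g, θ (x * g) = (f x).toAdd + θ g := by
  classical
  let rep : Coprod S (FreeGroup β) → Coprod S (FreeGroup β) := fun g =>
    (Quotient.mk (QuotientGroup.rightRel P1) g).out
  have hrep : ∀ g, g * (rep g)⁻¹ ∈ P1 := by
    intro g
    have : (QuotientGroup.rightRel P1) (rep g) g := Quotient.exact (Quotient.out_eq _)
    rwa [QuotientGroup.rightRel_apply] at this
  have hrepx : ∀ (x : P1) g, rep (x * g) = rep g := by
    intro x g
    simp only [rep]
    congr 1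
    apply Quotient.sound
    change (QuotientGroup.rightRel P1) _ _
    rw [QuotientGroup.rightRel_apply]
    simp
  refine ⟨fun g => (f ⟨_, hrep g⟩).toAdd, ?_⟩
  intro x g
  beta_reduce
  rw [← toAdd_mul, ← map_mul]
  congr 2
  apply Subtype.ext
  simp [hrepx, mul_assoc]

/-- Passing to the kernel of a map onto the integers keeps independence. -/
lemma indP_cover (R : ι → Coprod S (FreeGroup β)) [Fintype J] (idx : J → ι)
    (g : J → Coprod S (FreeGroup β))
    (P P1 : Subgroup (Coprod S (FreeGroup β))) (hP1 : P1 ≤ P) (hI : IndP R idx g P)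
    (r : J → J) (hr1 : ∀ j, idx (r j) = idx j) (hr2 : ∀ j, g j * (g (r j))⁻¹ ∈ P1)
    (hr3 : ∀ j k, RelP idx g P j k → r j = r k)
    (f : P1 →* Multiplicative ℤ) (hf : Function.Surjective f) :
    IndP R idx g (f.ker.map P1.subtype) := by
  classical
  obtain ⟨t, ht⟩ := hf (Multiplicative.ofAdd 1)
  obtain ⟨θ, hθ⟩ := exists_theta P1 f
  have hrr : ∀ j, r (r j) = r j := by
    intro j
    refine (hr3 j (r j) ⟨(hr1 j).symm, hP1 (hr2 j)⟩).symm
  have hθt : ∀ (h : ℤ) k, θ ((t : Coprod S (FreeGroup β)) ^ h * k) = h + θ k := by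
    intro h k
    have := hθ (t ^ h) k
    rw [map_zpow, ht] at this
    simpa using this
  have claim : ∀ N : ℕ, ∀ D : J → Polynomial ℚ, (∀ j m, N ≤ m → (D j).coeff m = 0) →
      ∃ φ : Coprod S (FreeGroup β) → β → ℚ,
        (∀ x ∈ f.ker.map P1.subtype, ∀ h y, φ (x * h) y = φ h y) ∧
        ∀ j (h : ℤ), QF φ ((t : Coprod S (FreeGroup β)) ^ h * g (r j)) (R (idx j)) =
          (D (r j)).eval (h : ℚ) := by
    intro N
    induction N with
    | zero =>
      intro D hD
      refine ⟨fun _ _ => 0, fun _ _ _ _ => rfl, ?_⟩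
      intro j h
      have h0 : D (r j) = 0 := by
        ext m; simpa using hD (r j) m (Nat.zero_le _)
      rw [h0, Polynomial.eval_zero]
      have := QF_smul 0 (fun _ _ => 0) ((t : Coprod S (FreeGroup β)) ^ h * g (r j)) (R (idx j))
      simpa using this
    | succ N ih =>
      intro D hD
      obtain ⟨φ0, h0, h0'⟩ := hI (fun j => (D (r j)).coeff N) (by
        intro j k hjk
        beta_reduce
        rw [hr3 j k hjk])
      let ψ : ℕ → Coprod S (FreeGroup β) → β → ℚ := fun k g y => φ0 g y * (θ g : ℚ) ^ k
      let pol : J → Polynomial ℚ := fun j => ∑ k ∈ Finset.range (N + 1),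
        Polynomial.C ((N.choose k : ℚ) * QF (ψ k) (g (r j)) (R (idx j))) * Polynomial.X ^ (N - k)
      have hpol : ∀ j (h : ℤ), QF (ψ N) ((t : Coprod S (FreeGroup β)) ^ h * g (r j)) (R (idx j)) =
          (pol j).eval (h : ℚ) := by
        intro j h
        rw [QF_trans]
        have e : (fun g x => ψ N ((t : Coprod S (FreeGroup β)) ^ h * g) x) = fun g x =>
            ∑ k ∈ Finset.range (N + 1), ((N.choose k : ℚ) * (h : ℚ) ^ (N - k)) * ψ k g x := by
          funext g x
          simp only [ψ]
          rw [hθt, h0 _ (hP1 (P1.zpow_mem t.2 h))]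
          push_cast
          rw [add_comm, add_pow, Finset.mul_sum]
          refine Finset.sum_congr rfl (fun k _ => ?_)
          ring
        rw [e, QF_sum]
        simp only [pol, Polynomial.eval_finset_sum]
        refine Finset.sum_congr rfl (fun k _ => ?_)
        rw [QF_smul]
        simp only [Polynomial.eval_mul, Polynomial.eval_C, Polynomial.eval_pow, Polynomial.eval_X]
        ring
      have hcoef : ∀ j m, N + 1 ≤ m → (pol j).coeff m = 0 := by
        intro j m hm
        simp only [pol, Polynomial.finset_sum_coeff]
        refine Finset.sum_eq_zero (fun k _ => ?_)
        rw [Polynomial.coeff_C_mul, Polynomial.coeff_X_pow, if_neg (by omega), mul_zero]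
      have hlead : ∀ j, (pol (r j)).coeff N = (D (r j)).coeff N := by
        intro j
        simp only [pol, Polynomial.finset_sum_coeff]
        rw [Finset.sum_eq_single 0]
        · rw [Polynomial.coeff_C_mul, Polynomial.coeff_X_pow]
          have e : ψ 0 = φ0 := by funext g x; simp [ψ]
          have := h0' (r j)
          simp only [hrr] at this
          simp [e, hrr, this]
        · intro k hk hk0
          rw [Finset.mem_range] at hk
          rw [Polynomial.coeff_C_mul, Polynomial.coeff_X_pow, if_neg (by omega), mul_zero]
        · intro h; simp at h
      obtain ⟨φ1, h1, h1'⟩ := ih (fun j => D (r j) - pol (r j)) (by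
        intro j m hm
        rw [Polynomial.coeff_sub]
        rcases Nat.lt_or_ge N m with h | h
        · rw [hD _ m h, hcoef _ m h, sub_zero]
        · obtain rfl : m = N := le_antisymm h hm
          rw [hlead, sub_self])
      refine ⟨fun g x => φ1 g x + ψ N g x, ?_, ?_⟩
      · rintro x hx h y
        beta_reduce
        rw [h1 x hx]
        obtain ⟨x', hx', rfl⟩ := hx
        have hx2 : f x' = 1 := hx'
        simp only [ψ, Subgroup.coe_subtype]
        rw [h0 _ (hP1 x'.2), hθ, hx2]; simp
      · intro j h
        rw [QF_add, h1', hpol]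
        have : pol (r (r j)) = pol j := by simp only [pol, hrr, hr1]
        rw [this, hrr]
        simp
  intro d hd
  let x : J → P1 := fun j => ⟨_, hr2 j⟩
  have hkey : ∀ j k, r j = r k → f (x j) = f (x k) → d j = d k := by
    intro j k h1 h2
    refine hd j k ⟨?_, ?_⟩
    · rw [← hr1 j, h1, hr1]
    · refine ⟨x j * (x k)⁻¹, ?_, ?_⟩
      · change f _ = 1
        rw [map_mul, map_inv, h2, mul_inv_cancel]
      · simp [x, h1]
  let val : J → ℚ → ℚ := fun s q => if h : ∃ j, r j = s ∧ (((f (x j)).toAdd : ℤ) : ℚ) = q then d h.choose else 0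
  have hval : ∀ j, val (r j) (((f (x j)).toAdd : ℤ) : ℚ) = d j := by
    intro j
    have h : ∃ k, r k = r j ∧ (((f (x k)).toAdd : ℤ) : ℚ) = (((f (x j)).toAdd : ℤ) : ℚ) := ⟨j, rfl, rfl⟩
    simp only [val, dif_pos h]
    obtain ⟨h1, h2⟩ := h.choose_spec
    apply hkey _ _ h1
    apply Multiplicative.toAdd.injective
    exact_mod_cast h2
  let nodes : Finset ℚ := Finset.univ.image (fun j => (((f (x j)).toAdd : ℤ) : ℚ))
  let D : J → Polynomial ℚ := fun s => Lagrange.interpolate nodes id (val s)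
  obtain ⟨φ, hφ, hφ'⟩ := claim (Finset.univ.sup (fun j => (D j).natDegree + 1)) D (by
    intro j m hm
    apply Polynomial.coeff_eq_zero_of_natDegree_lt
    have := Finset.le_sup (f := fun j => (D j).natDegree + 1) (Finset.mem_univ j)
    omega)
  refine ⟨φ, hφ, ?_⟩
  intro j
  have h1 := hφ' j (f (x j)).toAdd
  have h2 : (D (r j)).eval (((f (x j)).toAdd : ℤ) : ℚ) = d j := by
    rw [← hval j]
    have := Lagrange.eval_interpolate_at_node (s := nodes) (v := id) (i := (((f (x j)).toAdd : ℤ) : ℚ))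
      (val (r j)) (fun _ _ _ _ h => h) (Finset.mem_image_of_mem _ (Finset.mem_univ j))
    exact this
  rw [← h2, ← h1]
  have hz : ((x j * (t ^ (f (x j)).toAdd)⁻¹ : P1) : Coprod S (FreeGroup β)) ∈ f.ker.map P1.subtype := by
    refine ⟨x j * (t ^ (f (x j)).toAdd)⁻¹, ?_, rfl⟩
    change f _ = 1
    rw [map_mul, map_inv, map_zpow, ht, ← ofAdd_zsmul]
    simp
  have h3 := QF_inv φ _ (hφ _ hz) ((t : Coprod S (FreeGroup β)) ^ (f (x j)).toAdd * g (r j)) (R (idx j))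
  rw [← h3]
  congr 1
  simp [x]


set_option maxHeartbeats 1000000 in
lemma indP_step (hS : LocallyIndicable S) (R : ι → Coprod S (FreeGroup β)) [Fintype J] (idx : J → ι)
    (g : J → Coprod S (FreeGroup β)) (a : S) (ha : a ≠ 1)
    (hmem : Coprod.inl a ∈ Subgroup.closure (Set.range fun j => g j * R (idx j) * (g j)⁻¹))
    (P : Subgroup (Coprod S (FreeGroup β))) (hI : IndP R idx g P)
    (hc : ∀ j, g j * R (idx j) * (g j)⁻¹ ∈ P) :
    ∃ P' : Subgroup (Coprod S (FreeGroup β)), IndP R idx g P' ∧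
      (∀ j, g j * R (idx j) * (g j)⁻¹ ∈ P') ∧
      (∀ j k, RelP idx g P' j k → RelP idx g P j k) ∧
      ∃ j k, RelP idx g P j k ∧ ¬ RelP idx g P' j k := by
  classical
  let st : Setoid J := ⟨RelP idx g P, ⟨fun j => ⟨rfl, by simp [P.one_mem]⟩,
    fun {j k} h => ⟨h.1.symm, by simpa using P.inv_mem h.2⟩,
    fun {j k l} h h' => ⟨h.1.trans h'.1, by simpa using P.mul_mem h.2 h'.2⟩⟩⟩
  let r : J → J := fun j => (Quotient.mk st j).out
  have hr : ∀ j, RelP idx g P (r j) j := fun j => Quotient.exact (s := st) (Quotient.out_eq _)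
  have hr3 : ∀ j k, RelP idx g P j k → r j = r k := by
    intro j k h
    simp only [r]
    congr 1
    exact Quotient.sound (s := st) h
  have hx : ∀ j, g j * (g (r j))⁻¹ ∈ P := fun j => by simpa using P.inv_mem (hr j).2
  let gens : Set (Coprod S (FreeGroup β)) :=
    (Set.range fun j => g j * R (idx j) * (g j)⁻¹) ∪ Set.range (fun j => g j * (g (r j))⁻¹)
  have hfin : gens.Finite := (Set.finite_range _).union (Set.finite_range _)
  obtain ⟨P1, hP1e⟩ : ∃ P1, P1 = Subgroup.closure gens := ⟨_, rfl⟩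
  have hP1 : P1 ≤ P := by
    rw [hP1e, Subgroup.closure_le]
    rintro y (⟨j, rfl⟩ | ⟨j, rfl⟩)
    · exact hc j
    · exact hx j
  have hc1 : ∀ j, g j * R (idx j) * (g j)⁻¹ ∈ P1 := fun j => hP1e ▸ Subgroup.subset_closure (Or.inl ⟨j, rfl⟩)
  have hx1 : ∀ j, g j * (g (r j))⁻¹ ∈ P1 := fun j => hP1e ▸ Subgroup.subset_closure (Or.inr ⟨j, rfl⟩)
  haveI hfg : Group.FG P1 := by
    rw [Group.fg_iff_subgroup_fg, Subgroup.fg_iff]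
    exact ⟨gens, hP1e.symm, hfin⟩
  have haP1 : Coprod.inl a ∈ P1 := hP1e ▸ Subgroup.closure_mono Set.subset_union_left hmem
  obtain ⟨ρ, hρ⟩ := exists_retraction P1
  obtain ⟨χ, hχ⟩ : ∃ χ : (P1.comap (Coprod.inl : S →* Coprod S (FreeGroup β))) →* Multiplicative ℤ,
      Function.Surjective χ := by
    have hsurj : Function.Surjective ρ := fun d => ⟨⟨Coprod.inl d.1, d.2⟩, hρ d.1 d.2⟩
    haveI := Group.fg_of_surjective hsurj
    refine hS.exists_hom (Subgroup.subtype _) ?_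
    intro h
    have h1 := DFunLike.congr_fun h ⟨a, haP1⟩
    exact ha h1
  -- relator values
  let cj : J → P1 := fun j => ⟨_, hc1 j⟩
  obtain ⟨φ, hφ, hφ'⟩ := hI (fun j => -((χ (ρ (cj j))).toAdd : ℚ)) (by
    intro j k hjk
    have hxx : g j * (g k)⁻¹ ∈ P1 := by
      have h1 := P1.mul_mem (hx1 j) (P1.inv_mem (hx1 k))
      rw [hr3 j k hjk] at h1
      simpa using h1
    have : cj j = ⟨_, hxx⟩ * cj k * (⟨_, hxx⟩ : P1)⁻¹ := by
      apply Subtype.ext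
      simp [cj, hjk.1, mul_assoc]
    beta_reduce
    rw [this]
    simp [mul_comm])
  let F : P1 →* Multiplicative ℚ := MonoidHom.mk'
    (fun x => Multiplicative.ofAdd (((χ (ρ x)).toAdd : ℚ) + QF φ 1 x)) (by
      intro x y
      rw [← ofAdd_add]
      congr 1
      have h1 := QF_inv φ x (hφ x (hP1 x.2)) 1 y
      rw [mul_one] at h1
      rw [map_mul, map_mul, toAdd_mul, Subgroup.coe_mul, QF_mul, one_mul, h1]
      push_cast; ring)
  have hF : ∀ x, (F x).toAdd = ((χ (ρ x)).toAdd : ℚ) + QF φ 1 x := fun _ => rfl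
  have hFne : F ≠ 1 := by
    intro h
    obtain ⟨d, hd⟩ := hχ (Multiplicative.ofAdd 1)
    have hdm : Coprod.inl d.1 ∈ P1 := d.2
    have h1 : (F ⟨Coprod.inl d.1, hdm⟩).toAdd = 0 := by rw [h]; rfl
    rw [hF, hρ d.1 hdm, QF_inl] at h1
    have h2 : χ ⟨d.1, d.2⟩ = Multiplicative.ofAdd 1 := hd
    rw [h2] at h1
    simp at h1
  have hFc : ∀ j, (F (cj j)).toAdd = 0 := by
    intro j
    rw [hF]
    have h1 := QF_conj φ (g j) (R (idx j)) (hφ _ (hc j))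
    have h2 := hφ' j
    simp only [cj] at h2 ⊢
    rw [h1, h2]; ring
  obtain ⟨f, q, hfs, hq, hfq⟩ := rat_to_int F hFne
  have hfc : ∀ j, f (cj j) = 1 := by
    intro j
    have h1 := hfq (cj j)
    rw [hFc] at h1
    have h2 : (((f (cj j)).toAdd : ℤ) : ℚ) = 0 := by
      rcases mul_eq_zero.1 h1.symm with h | h
      · exact absurd h hq
      · exact h
    apply Multiplicative.toAdd.injective
    exact_mod_cast h2
  obtain ⟨j0, hj0⟩ : ∃ j, f ⟨_, hx1 j⟩ ≠ 1 := by
    by_contra hcon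
    push Not at hcon
    apply surj_ne_one hfs
    have hker : ∀ y (hy : y ∈ P1), f ⟨y, hy⟩ = 1 := by
      subst hP1e
      intro y hy
      induction hy using Subgroup.closure_induction with
      | mem z hz =>
        rcases hz with ⟨j, rfl⟩ | ⟨j, rfl⟩
        · exact hfc j
        · exact hcon j
      | one => exact map_one f
      | mul u v hu hv h1 h2 =>
        have : f (⟨u, hu⟩ * ⟨v, hv⟩) = 1 := by rw [map_mul, h1, h2, mul_one]
        exact this
      | inv u hu h1 =>
        have : f (⟨u, hu⟩⁻¹) = 1 := by rw [map_inv, h1, inv_one]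
        exact this
    refine MonoidHom.ext fun y => hker y.1 y.2
  refine ⟨f.ker.map P1.subtype, indP_cover R idx g P P1 hP1 hI r (fun j => (hr j).1) hx1 hr3 f hfs,
    ?_, ?_, j0, r j0, ?_, ?_⟩
  · intro j
    exact ⟨cj j, hfc j, rfl⟩
  · rintro j k ⟨h1, ⟨y, hy, h2⟩⟩
    refine ⟨h1, ?_⟩
    rw [← h2]; exact hP1 y.2
  · exact ⟨(hr j0).1.symm, hx j0⟩
  · rintro ⟨-, y, hy, h2⟩
    apply hj0
    have : y = ⟨_, hx1 j0⟩ := Subtype.ext h2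
    rw [← this]; exact hy

/-- Howie's theorem on independent systems of equations over locally indicable groups. -/
theorem howie_independent (hS : LocallyIndicable S) (R : ι → Coprod S (FreeGroup β))
    (hR : ∀ d : ι → ℚ, ∃ E : FreeGroup β →* Multiplicative ℚ,
      ∀ i, (E (Coprod.snd (R i))).toAdd = d i)
    (a : S) (hmem : Coprod.inl a ∈ Subgroup.normalClosure (Set.range R)) : a = 1 := by
  classical
  by_contra ha
  have hfin : ∀ x ∈ Subgroup.normalClosure (Set.range R), ∃ T : Finset (ι × Coprod S (FreeGroup β)),
      x ∈ Subgroup.closure ((fun q : ι × Coprod S (FreeGroup β) => q.2 * R q.1 * q.2⁻¹) '' T) := by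
    intro x hx
    unfold Subgroup.normalClosure at hx
    induction hx using Subgroup.closure_induction with
    | mem z hz =>
      rw [Group.mem_conjugatesOfSet_iff] at hz
      obtain ⟨y, ⟨i, rfl⟩, hy⟩ := hz
      obtain ⟨c, rfl⟩ := isConj_iff.1 hy
      exact ⟨{(i, c)}, Subgroup.subset_closure ⟨(i, c), by simp, rfl⟩⟩
    | one => exact ⟨∅, Subgroup.one_mem _⟩
    | mul u v _ _ h1 h2 =>
      obtain ⟨T1, h1⟩ := h1
      obtain ⟨T2, h2⟩ := h2
      refine ⟨T1 ∪ T2, Subgroup.mul_mem _ ?_ ?_⟩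
      · exact Subgroup.closure_mono (Set.image_mono (by simp)) h1
      · exact Subgroup.closure_mono (Set.image_mono (by simp)) h2
    | inv u _ h1 =>
      obtain ⟨T1, h1⟩ := h1
      exact ⟨T1, Subgroup.inv_mem _ h1⟩
  obtain ⟨T, hT⟩ := hfin _ hmem
  let J := {q // q ∈ T}
  let idx : J → ι := fun q => q.1.1
  let g : J → Coprod S (FreeGroup β) := fun q => q.1.2
  have hmem' : Coprod.inl a ∈ Subgroup.closure (Set.range fun j => g j * R (idx j) * (g j)⁻¹) := by
    refine Subgroup.closure_mono ?_ hT
    rintro _ ⟨q, hq, rfl⟩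
    exact ⟨⟨q, hq⟩, rfl⟩
  have main : ∀ n : ℕ, ∀ P : Subgroup (Coprod S (FreeGroup β)), IndP R idx g P →
      (∀ j, g j * R (idx j) * (g j)⁻¹ ∈ P) →
      (Finset.univ.filter (fun p : J × J => RelP idx g P p.1 p.2)).card = n → False := by
    intro n
    induction n using Nat.strong_induction_on with
    | _ n ih =>
      intro P hI hc hn
      obtain ⟨P', h1, h2, h3, j, k, h4, h5⟩ := indP_step hS R idx g a ha hmem' P hI hc
      refine ih _ ?_ P' h1 h2 rfl
      rw [← hn]
      apply Finset.card_lt_card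
      rw [Finset.ssubset_iff_of_subset]
      · exact ⟨(j, k), by simp [h4], by simp [h5]⟩
      · intro p hp
        simp only [Finset.mem_filter, Finset.mem_univ, true_and] at hp ⊢
        exact h3 _ _ hp
  refine main _ ⊤ ?_ (fun j => trivial) rfl
  intro d hd
  obtain ⟨E, hE⟩ := hR (fun i => if h : ∃ j, idx j = i then d h.choose else 0)
  refine ⟨fun _ x => (E (FreeGroup.of x)).toAdd, fun _ _ _ _ => rfl, ?_⟩
  intro j
  rw [QF_const, hE]
  have h : ∃ k, idx k = idx j := ⟨j, rfl⟩
  rw [dif_pos h]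
  exact hd _ _ ⟨h.choose_spec, trivial⟩

end TheoremH2

section Window

lemma howie_exists {S β ι : Type} [Group S] (hS : LocallyIndicable S) (R : ι → Coprod S (FreeGroup β))
    (hR : ∀ d : ι → ℚ, ∃ E : FreeGroup β →* Multiplicative ℚ,
      ∀ i, (E (Coprod.snd (R i))).toAdd = d i) :
    ∃ (Γ : Type) (_ : Group Γ) (s : S →* Γ) (F : FreeGroup β →* Γ), Function.Injective s ∧
      ∀ i, Coprod.lift s F (R i) = 1 := by
  let N := Subgroup.normalClosure (Set.range R)
  refine ⟨Coprod S (FreeGroup β) ⧸ N, inferInstance, (QuotientGroup.mk' N).comp Coprod.inl,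
    (QuotientGroup.mk' N).comp Coprod.inr, ?_, ?_⟩
  · rw [injective_iff_map_eq_one]
    intro a ha
    apply howie_independent hS R hR a
    exact (QuotientGroup.eq_one_iff _).1 ha
  · intro i
    have h : Coprod.lift ((QuotientGroup.mk' N).comp Coprod.inl) ((QuotientGroup.mk' N).comp Coprod.inr)
        = QuotientGroup.mk' N := by
      apply Coprod.hom_ext <;> rfl
    rw [h]
    exact (QuotientGroup.eq_one_iff _).2 (Subgroup.subset_normalClosure ⟨i, rfl⟩)

/-- Reindexing a free power. -/
def cmap {X Y B : Type} [Group B] (u : X → Y) : CoprodI (fun _ : X => B) →* CoprodI (fun _ : Y => B) :=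
  CoprodI.lift (fun x => CoprodI.of (M := fun _ : Y => B) (i := u x))

lemma cmap_of {X Y B : Type} [Group B] (u : X → Y) (x : X) (b : B) :
    cmap u (CoprodI.of (M := fun _ : X => B) (i := x) b) = CoprodI.of (M := fun _ : Y => B) (i := u x) b := by
  simp [cmap]

lemma cmap_comp {X Y Z B : Type} [Group B] (u : X → Y) (v : Y → Z) :
    (cmap v).comp (cmap u) = cmap (B := B) (fun x => v (u x)) := by
  apply CoprodI.ext_hom
  intro x
  ext b
  simp only [MonoidHom.comp_apply]
  rw [cmap_of, cmap_of, cmap_of]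

open Classical in
lemma cmap_leftInverse {X Y B : Type} [Group B] (u : X → Y) (hu : Function.Injective u) :
    ∃ v : CoprodI (fun _ : Y => B) →* CoprodI (fun _ : X => B), v.comp (cmap u) = MonoidHom.id _ := by
  refine ⟨CoprodI.lift (fun y => if h : ∃ x, u x = y then CoprodI.of (M := fun _ : X => B) (i := h.choose) else 1), ?_⟩
  apply CoprodI.ext_hom
  intro x
  ext b
  simp only [MonoidHom.comp_apply]
  rw [cmap_of, CoprodI.lift_of]
  have h : ∃ x', u x' = u x := ⟨x, rfl⟩
  rw [dif_pos h, hu h.choose_spec]; rfl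

/-- The window group. -/
abbrev WW (K X B : Type) [Group K] [Group B] := Coprod K (CoprodI (fun _ : X => B))

/-- Reindexing a window group. -/
def wmap {K X Y B : Type} [Group K] [Group B] (κ : K →* K) (u : X → Y) : WW K X B →* WW K Y B :=
  Coprod.map κ (cmap u)

/-- The letter `b` at level `x`. -/
def wof {K X B : Type} [Group K] [Group B] (x : X) : B →* WW K X B :=
  Coprod.inr.comp (CoprodI.of (M := fun _ : X => B) (i := x))

lemma wmap_wof {K X Y B : Type} [Group K] [Group B] (κ : K →* K) (u : X → Y) (x : X) (b : B) :
    wmap (K := K) κ u (wof x b) = wof (u x) b := by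
  simp only [wmap, wof, MonoidHom.comp_apply, Coprod.map_apply_inr, cmap_of]

lemma wmap_inl {K X Y B : Type} [Group K] [Group B] (κ : K →* K) (u : X → Y) (k : K) :
    wmap (B := B) κ u (Coprod.inl k) = Coprod.inl (κ k) := rfl

lemma ww_hom_ext {K X B G : Type} [Group K] [Group B] [Group G] {f g : WW K X B →* G}
    (h1 : ∀ k, f (Coprod.inl k) = g (Coprod.inl k)) (h2 : ∀ x b, f (wof x b) = g (wof x b)) :
    f = g := by
  apply Coprod.hom_ext
  · ext k; exact h1 k
  · apply CoprodI.ext_hom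
    intro x
    ext b
    exact h2 x b

lemma wmap_injective {K X Y B : Type} [Group K] [Group B] (κ : K ≃* K) (u : X → Y)
    (hu : Function.Injective u) : Function.Injective (wmap (B := B) κ.toMonoidHom u) := by
  obtain ⟨v, hv⟩ := cmap_leftInverse (B := B) u hu
  have : (Coprod.map κ.symm.toMonoidHom v).comp (wmap (B := B) κ.toMonoidHom u) = MonoidHom.id _ := by
    apply Coprod.hom_ext
    · ext k; simp [wmap]
    · refine MonoidHom.ext fun b => ?_
      have := DFunLike.congr_fun hv b
      simp only [MonoidHom.comp_apply, MonoidHom.id_apply] at this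
      simp [wmap, this]
  exact Function.LeftInverse.injective (g := Coprod.map κ.symm.toMonoidHom v)
    (fun x => DFunLike.congr_fun this x)

/-- The two-factor Freiheitssatz for cyclically reduced words of length `2q`. -/
def TF (q : ℕ) : Prop := ∀ (A B : Type) [Group A] [Group B], LocallyIndicable A → LocallyIndicable B →
  ∀ L : List (A × B), L.length = q → L ≠ [] → (∀ x ∈ L, x.1 ≠ 1 ∧ x.2 ≠ 1) →
    ∃ (Γ : Type) (_ : Group Γ) (α : A →* Γ) (β : B →* Γ), Function.Injective α ∧
      Function.Injective β ∧ altProd α β L = 1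

variable {A B : Type} [Group A] [Group B] (f : A →* Multiplicative ℤ)

/-- The integer value of `f`. -/
def fz (a : A) : ℤ := (f a).toAdd

/-- Total exponent of a list of pairs. -/
def tot (L : List (A × B)) : ℤ := (L.map (fun x => fz f x.1)).sum

@[simp] lemma tot_nil : tot f ([] : List (A × B)) = 0 := rfl
@[simp] lemma tot_cons (x : A × B) (L : List (A × B)) : tot f (x :: L) = fz f x.1 + tot f L := by
  simp [tot]
@[simp] lemma tot_append (L L' : List (A × B)) : tot f (L ++ L') = tot f L + tot f L' := by
  simp [tot]

variable {f} {t : A} (ht : f t = Multiplicative.ofAdd 1)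

/-- The kernel part of a syllable at level `e`. -/
def kk (e : ℤ) (a : A) : f.ker := ⟨t ^ e * a * t ^ (-(e + fz f a)), by
  rw [MonoidHom.mem_ker, map_mul, map_mul, map_zpow, map_zpow, ht]
  apply Multiplicative.toAdd.injective
  simp [fz]⟩

/-- The rewritten word. -/
def wword (e : ℤ) : List (A × B) → WW f.ker ℤ B
  | [] => 1
  | x :: L => Coprod.inl (kk ht e x.1) * wof (e + fz f x.1) x.2 * wword (e + fz f x.1) L

lemma wword_append (e : ℤ) (L L' : List (A × B)) :
    wword ht e (L ++ L') = wword ht e L * wword ht (e + tot f L) L' := by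
  induction L generalizing e with
  | nil => simp [wword]
  | cons x L ih => simp [wword, ih, mul_assoc, add_assoc]

/-- Back to the free product. -/
noncomputable def back (f : A →* Multiplicative ℤ) (B : Type) [Group B] (t : A) :
    WW f.ker ℤ B →* Coprod A B := Coprod.lift (Coprod.inl.comp f.ker.subtype)
  (CoprodI.lift (fun n : ℤ => (MulAut.conj (Coprod.inl (t ^ n) : Coprod A B)).toMonoidHom.comp Coprod.inr))

lemma back_inl (k : f.ker) : back f B t (Coprod.inl k) = Coprod.inl k.1 := rfl

lemma back_wof (n : ℤ) (b : B) : back f B t (wof n b) =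
    Coprod.inl (t ^ n) * Coprod.inr b * (Coprod.inl (t ^ n))⁻¹ := by
  simp only [back, wof, MonoidHom.comp_apply, Coprod.lift_apply_inr, CoprodI.lift_of]
  rfl

lemma back_wword (e : ℤ) (L : List (A × B)) : back f B t (wword ht e L) =
    Coprod.inl (t ^ e) * altProd Coprod.inl Coprod.inr L * (Coprod.inl (t ^ (e + tot f L)))⁻¹ := by
  induction L generalizing e with
  | nil => simp [wword]
  | cons x L ih =>
    rw [wword, map_mul, map_mul, ih, back_inl, back_wof]
    rw [tot_cons, ← add_assoc, altProd_cons]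
    generalize hs : e + fz f x.1 = s
    have h1 : ((kk ht e x.1 : f.ker) : A) = t ^ e * x.1 * (t ^ s)⁻¹ := by
      simp only [kk]; rw [hs, zpow_neg]
    rw [h1, map_mul, map_mul, map_inv]
    group

/-- Number of visits of level `l`. -/
def cnt (f : A →* Multiplicative ℤ) (l e : ℤ) : List (A × B) → ℕ
  | [] => 0
  | x :: L => (if e + fz f x.1 = l then 1 else 0) + cnt f l (e + fz f x.1) L

lemma cnt_le (l e : ℤ) (L : List (A × B)) : cnt f l e L ≤ L.length := by
  induction L generalizing e with
  | nil => simp [cnt]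
  | cons x L ih =>
    have := ih (e + fz f x.1)
    simp only [cnt, List.length_cons]
    split_ifs <;> omega

lemma cnt_eq (l : ℤ) (L : List (A × B)) (h : cnt f l l L = L.length) : ∀ x ∈ L, fz f x.1 = 0 := by
  induction L with
  | nil => simp
  | cons x L ih =>
    have h1 := cnt_le (f := f) l (l + fz f x.1) L
    simp only [cnt, List.length_cons] at h
    split_ifs at h with h2
    · have h3 : fz f x.1 = 0 := by omega
      rw [h3, add_zero] at h
      intro y hy
      rcases List.mem_cons.1 hy with rfl | hy
      · exact h3
      · exact ih (by omega) y hy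
    · omega

/-- The inclusion of the window group missing level `l`. -/
def iot (f : A →* Multiplicative ℤ) (B : Type) [Group B] (l : ℤ) :
    WW f.ker {n : ℤ // n ≠ l} B →* WW f.ker ℤ B := wmap (MulEquiv.refl _).toMonoidHom Subtype.val

lemma iot_injective (l : ℤ) : Function.Injective (iot f B l) :=
  wmap_injective _ _ Subtype.val_injective

lemma regroup (l : ℤ) (T acc : List (A × B)) (hT : ∀ x ∈ T, x.1 ≠ 1 ∧ x.2 ≠ 1)
    (hacc : ∀ x ∈ acc, x.1 ≠ 1 ∧ x.2 ≠ 1)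
    (hav : wword ht l acc ∈ (iot f B l).range)
    (hnil : T = [] → acc = [])
    (htot : l + tot f acc + tot f T = l) :
    ∃ M : List (WW f.ker {n : ℤ // n ≠ l} B × B), (∀ x ∈ M, x.1 ≠ 1 ∧ x.2 ≠ 1) ∧
      wword ht l (acc ++ T) = altProd (iot f B l) (wof l) M ∧
      M.length = cnt f l (l + tot f acc) T ∧ (T ≠ [] → M ≠ []) := by
  induction T generalizing acc with
  | nil =>
    refine ⟨[], by simp, ?_, rfl, by simp⟩
    rw [hnil rfl]; simp [wword]
  | cons x T ih =>
    have hx := hT x List.mem_cons_self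
    have hT' : ∀ x ∈ T, x.1 ≠ 1 ∧ x.2 ≠ 1 := fun y hy => hT y (List.mem_cons_of_mem _ hy)
    have hkmem : ∀ k : f.ker, Coprod.inl k ∈ (iot f B l).range := fun k => ⟨Coprod.inl k, rfl⟩
    by_cases hl : l + tot f acc + fz f x.1 = l
    · obtain ⟨y, hy⟩ := (iot f B l).range.mul_mem hav (hkmem (kk ht (l + tot f acc) x.1))
      obtain ⟨M, h1, h2, h3, h4⟩ := ih [] hT' (by simp) ⟨1, by simp [wword]⟩ (by simp) (by
        simp only [tot_cons, tot_nil] at htot ⊢; omega)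
      refine ⟨(y, x.2) :: M, ?_, ?_, ?_, by simp⟩
      · intro z hz
        rcases List.mem_cons.1 hz with rfl | hz
        · refine ⟨?_, hx.2⟩
          intro hy1
          simp only at hy1
          rw [hy1, map_one] at hy
          have h5 := congrArg (back f B t) hy
          rw [map_one, map_mul, back_wword, back_inl] at h5
          apply altProd_ne_one acc hacc x.1 hx.1
          simp only [kk, hl, map_mul] at h5
          have h6 : (altProd Coprod.inl Coprod.inr acc * Coprod.inl x.1 : Coprod A B) =
            (Coprod.inl (t ^ l))⁻¹ * (Coprod.inl (t ^ l) * altProd Coprod.inl Coprod.inr acc *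
              (Coprod.inl (t ^ (l + tot f acc)))⁻¹ * (Coprod.inl (t ^ (l + tot f acc)) * Coprod.inl x.1 * Coprod.inl (t ^ (-l)))) *
                Coprod.inl (t ^ l) := by simp [mul_assoc]
          rw [h6, ← h5]; simp
        · exact h1 z hz
      · rw [altProd_cons, ← h2, hy, wword_append, wword, hl]
        simp [mul_assoc]
      · simp only [List.length_cons, h3, cnt, hl, if_true, tot_nil, add_zero]; omega
    · have hT0 : T ≠ [] := by
        rintro rfl
        simp only [tot_cons, tot_nil] at htot
        omega
      obtain ⟨M, h1, h2, h3, h4⟩ := ih (acc ++ [x]) hT' (by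
          intro y hy
          rcases List.mem_append.1 hy with hy | hy
          · exact hacc y hy
          · rw [List.mem_singleton.1 hy]; exact hx) (by
          rw [wword_append]
          refine Subgroup.mul_mem _ hav ?_
          simp only [wword, mul_one]
          refine Subgroup.mul_mem _ (hkmem _) ⟨wof ⟨_, hl⟩ x.2, ?_⟩
          rw [iot, wmap_wof]) (fun h => absurd h hT0) (by
          simp only [tot_append, tot_cons, tot_nil] at htot ⊢; omega)
      refine ⟨M, h1, ?_, ?_, fun _ => h4 hT0⟩
      · rw [← h2]; simp
      · rw [h3]; simp only [tot_append, tot_cons, tot_nil, cnt, hl, if_false]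
        simp [add_assoc]

end Window

section WLsec

variable {A B : Type} [Group A] [Group B] {f : A →* Multiplicative ℤ} {t : A}
  (ht : f t = Multiplicative.ofAdd 1)

lemma fz_mul (a b : A) : fz f (a * b) = fz f a + fz f b := by simp [fz]

lemma level_kill0 (hA : LocallyIndicable A) (hB : LocallyIndicable B) (l : ℤ) (L : List (A × B))
    (hTF : ∀ q' < L.length, TF q') (hL : ∀ x ∈ L, x.1 ≠ 1 ∧ x.2 ≠ 1) (htot : tot f L = 0)
    (hne : ∃ x ∈ L, fz f x.1 ≠ 0) :
    ∃ (Γ : Type) (_ : Group Γ) (π : WW f.ker ℤ B →* Γ), Function.Injective (π.comp (iot f B l)) ∧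
      π (wword ht l L) = 1 := by
  classical
  obtain ⟨x0, hx0, hx0'⟩ := hne
  have hL0 : L ≠ [] := List.ne_nil_of_mem hx0
  obtain ⟨M, h1, h2, h3, h4⟩ := regroup ht l L [] hL (by simp) ⟨1, by simp [wword]⟩ (by simp)
    (by simp [htot])
  have hlt : M.length < L.length := by
    rw [h3]
    simp only [tot_nil, add_zero]
    refine lt_of_le_of_ne (cnt_le _ _ _) ?_
    intro h
    exact hx0' (cnt_eq l L h x0 hx0)
  have hW : LocallyIndicable (WW f.ker {n : ℤ // n ≠ l} B) :=
    LocallyIndicable.coprod (hA.subgroup _) (locallyIndicable_coprodI _ _ hB)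
  obtain ⟨Γ, _, a, b, ha, hb, hab⟩ := hTF _ hlt _ _ hW hB M rfl (h4 hL0) h1
  obtain ⟨π, hπ⟩ : ∃ π : WW f.ker ℤ B →* Γ, π = Coprod.lift (a.comp Coprod.inl)
    (CoprodI.lift (fun n : ℤ => if h : n ≠ l then a.comp (wof ⟨n, h⟩) else b)) := ⟨_, rfl⟩
  have hπ1 : π.comp (iot f B l) = a := by
    apply ww_hom_ext
    · intro k
      rw [MonoidHom.comp_apply, iot, wmap_inl, hπ]; rfl
    · intro x c
      rw [MonoidHom.comp_apply, iot, wmap_wof, hπ, wof]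
      simp only [MonoidHom.comp_apply, Coprod.lift_apply_inr, CoprodI.lift_of]
      rw [dif_pos x.2]; rfl
  have hπ2 : π.comp (wof l) = b := by
    refine MonoidHom.ext fun c => ?_
    rw [hπ, wof]
    simp only [MonoidHom.comp_apply, Coprod.lift_apply_inr, CoprodI.lift_of]
    rw [dif_neg (by simp)]
  refine ⟨Γ, inferInstance, π, by rw [hπ1]; exact ha, ?_⟩
  rw [List.nil_append] at h2
  rw [h2, map_altProd, hπ1, hπ2, hab]

lemma level_kill (hA : LocallyIndicable A) (hB : LocallyIndicable B) (e l : ℤ) (P Q : List (A × B))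
    (hTF : ∀ q' < (P ++ Q).length, TF q') (hL : ∀ x ∈ P ++ Q, x.1 ≠ 1 ∧ x.2 ≠ 1)
    (htot : tot f (P ++ Q) = 0)
    (hne : ∃ x ∈ P ++ Q, fz f x.1 ≠ 0) (hl : e + tot f P = l) :
    ∃ (Γ : Type) (_ : Group Γ) (π : WW f.ker ℤ B →* Γ), Function.Injective (π.comp (iot f B l)) ∧
      π (wword ht e (P ++ Q)) = 1 := by
  have hmem : ∀ x, x ∈ Q ++ P ↔ x ∈ P ++ Q := by intro x; simp [or_comm]
  obtain ⟨Γ, _, π, h1, h2⟩ := level_kill0 ht hA hB l (Q ++ P)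
    (by simpa [add_comm] using hTF) (fun x hx => hL x ((hmem x).1 hx))
    (by rw [tot_append] at htot ⊢; omega) (by
      obtain ⟨x, hx, hx'⟩ := hne
      exact ⟨x, (hmem x).2 hx, hx'⟩)
  refine ⟨Γ, inferInstance, π, h1, ?_⟩
  rw [wword_append, map_mul] at h2 ⊢
  have h3 : l + tot f Q = e := by rw [tot_append] at htot; omega
  rw [h3] at h2
  rw [hl]
  rw [mul_eq_one_iff_eq_inv] at h2
  rw [h2]; simp

lemma hnn_part (m : ℤ) {Λ : Type} [Group Λ] (π : WW f.ker ℤ B →* Λ)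
    (h0 : Function.Injective (π.comp (iot f B 0))) (h1 : Function.Injective (π.comp (iot f B m))) :
    ∃ (Γ : Type) (_ : Group Γ) (o : Λ →* Γ) (τ : Γ), Function.Injective o ∧
      (∀ k : f.ker, τ * o (π (Coprod.inl k)) = o (π (Coprod.inl (MulAut.conjNormal t k))) * τ) ∧
      ∀ n, 0 ≤ n → n < m → ∀ b, τ * o (π (wof n b)) = o (π (wof (n + 1) b)) * τ := by
  obtain ⟨lam, hlam⟩ : ∃ lam : WW f.ker {n : ℤ // 0 ≤ n ∧ n < m} B →* WW f.ker {n : ℤ // n ≠ m} B,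
    lam = wmap (MulEquiv.refl _).toMonoidHom (fun n => ⟨n.1, n.2.2.ne⟩) := ⟨_, rfl⟩
  obtain ⟨ups, hups⟩ : ∃ ups : WW f.ker {n : ℤ // 0 ≤ n ∧ n < m} B →* WW f.ker {n : ℤ // n ≠ 0} B,
    ups = wmap (MulAut.conjNormal t : MulAut f.ker).toMonoidHom
      (fun n => ⟨n.1 + 1, by have := n.2.1; omega⟩) := ⟨_, rfl⟩
  have il : Function.Injective lam := by
    rw [hlam]; apply wmap_injective
    intro x y h
    simpa [Subtype.ext_iff] using h
  have iu : Function.Injective ups := by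
    rw [hups]; apply wmap_injective
    intro x y h
    simpa [Subtype.ext_iff] using h
  obtain ⟨l, hl⟩ : ∃ l : WW f.ker {n : ℤ // 0 ≤ n ∧ n < m} B →* Λ, l = (π.comp (iot f B m)).comp lam :=
    ⟨_, rfl⟩
  obtain ⟨u, hu⟩ : ∃ u : WW f.ker {n : ℤ // 0 ≤ n ∧ n < m} B →* Λ, u = (π.comp (iot f B 0)).comp ups :=
    ⟨_, rfl⟩
  have jl : Function.Injective l := by rw [hl]; exact h1.comp il
  have ju : Function.Injective u := by rw [hu]; exact h0.comp iu
  let φ : l.range ≃* u.range := (MonoidHom.ofInjective jl).symm.trans (MonoidHom.ofInjective ju)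
  have key0 : ∀ w, (HNNExtension.t : HNNExtension Λ l.range u.range φ) * HNNExtension.of (l w) =
      HNNExtension.of (u w) * HNNExtension.t := by
    intro w
    have := HNNExtension.t_mul_of (φ := φ) (MonoidHom.ofInjective jl w)
    rw [show ((MonoidHom.ofInjective jl w : l.range) : Λ) = l w from rfl] at this
    rw [this]
    congr 2
    simp only [φ, MulEquiv.trans_apply, MulEquiv.symm_apply_apply]
    rfl
  have key : ∀ w x y, l w = x → u w = y →
      (HNNExtension.t : HNNExtension Λ l.range u.range φ) * HNNExtension.of x =
      HNNExtension.of y * HNNExtension.t := by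
    rintro w x y rfl rfl
    exact key0 w
  refine ⟨HNNExtension Λ l.range u.range φ, inferInstance, HNNExtension.of, HNNExtension.t,
    HNNExtension.of_injective φ, ?_, ?_⟩
  · intro k
    have e1 : l (Coprod.inl k) = π (Coprod.inl k) := by
      rw [hl]
      simp only [MonoidHom.comp_apply, hlam, wmap_inl, iot]
      rfl
    have e2 : u (Coprod.inl k) = π (Coprod.inl (MulAut.conjNormal t k)) := by
      rw [hu]
      simp only [MonoidHom.comp_apply, hups, wmap_inl, iot]
      rfl
    exact key _ _ _ e1 e2
  · intro n hn0 hn1 b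
    have e1 : l (wof ⟨n, hn0, hn1⟩ b) = π (wof n b) := by
      rw [hl]
      simp only [MonoidHom.comp_apply, hlam, wmap_wof, iot]
    have e2 : u (wof ⟨n, hn0, hn1⟩ b) = π (wof (n + 1) b) := by
      rw [hu]
      simp only [MonoidHom.comp_apply, hups, wmap_wof, iot]
    exact key _ _ _ e1 e2

lemma tau_conj {K Γ : Type} [Group K] [Group Γ] (P : K →* Γ) (τ : Γ) (c : MulAut K)
    (h : ∀ k, τ * P k = P (c k) * τ) (n : ℤ) : ∀ k, τ ^ n * P k = P ((c ^ n) k) * τ ^ n := by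
  induction n with
  | zero => simp
  | succ n ih =>
    intro k
    rw [zpow_add_one, mul_assoc, h, ← mul_assoc, ih, mul_assoc, zpow_add_one, MulAut.mul_apply]
  | pred n ih =>
    intro k
    have h' : τ⁻¹ * P k = P (c⁻¹ k) * τ⁻¹ := by
      have := h (c⁻¹ k)
      rw [MulAut.apply_inv_self] at this
      rw [inv_mul_eq_iff_eq_mul, ← mul_assoc, this]; simp
    rw [zpow_sub_one, mul_assoc, h', ← mul_assoc, ih, mul_assoc, zpow_sub_one, MulAut.mul_apply]

lemma kk_zero_of_ker (k : f.ker) : kk ht 0 k.1 = k := by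
  have : fz f k.1 = 0 := by
    have := k.2
    rw [MonoidHom.mem_ker] at this
    simp [fz, this]
  apply Subtype.ext
  simp [kk, this]

lemma WL (ht : f t = Multiplicative.ofAdd 1) (hA : LocallyIndicable A) (hB : LocallyIndicable B) (L : List (A × B))
    (hTF : ∀ q' < L.length, TF q') (hL : ∀ x ∈ L, x.1 ≠ 1 ∧ x.2 ≠ 1) (htot : tot f L = 0)
    (hne : ∃ x ∈ L, fz f x.1 ≠ 0) :
    ∃ (Γ : Type) (_ : Group Γ) (α : A →* Γ) (β : B →* Γ), altProd α β L = 1 ∧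
      Function.Injective (Coprod.lift (α.comp f.ker.subtype) β) := by
  obtain ⟨i0, -, hi0⟩ := Finset.exists_min_image (Finset.range (L.length + 1))
    (fun i => tot f (L.take i)) ⟨0, by simp⟩
  obtain ⟨i1, -, hi1⟩ := Finset.exists_max_image (Finset.range (L.length + 1))
    (fun i => tot f (L.take i)) ⟨0, by simp⟩
  obtain ⟨e, he⟩ : ∃ e, e = - tot f (L.take i0) := ⟨_, rfl⟩
  obtain ⟨m, hm⟩ : ∃ m, m = e + tot f (L.take i1) := ⟨_, rfl⟩
  have hlev : ∀ P Q, L = P ++ Q → 0 ≤ e + tot f P ∧ e + tot f P ≤ m := by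
    intro P Q hPQ
    have h1 : P.length ∈ Finset.range (L.length + 1) := by
      rw [hPQ]; simp
    have h2 := hi0 _ h1
    have h3 := hi1 _ h1
    rw [show L.take P.length = P by rw [hPQ]; simp] at h2 h3
    omega
  have hm1 : 1 ≤ m := by
    obtain ⟨x, hx, hx'⟩ := hne
    obtain ⟨P, Q, hPQ⟩ := List.append_of_mem hx
    have h1 := hlev P _ hPQ
    have h2 := hlev (P ++ [x]) Q (by simp [hPQ])
    simp only [tot_append, tot_cons, tot_nil] at h2
    omega
  obtain ⟨Γ0, _, π0, hπ0, hk0⟩ := level_kill ht hA hB e 0 (L.take i0) (L.drop i0)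
    (by simpa using hTF) (by simpa using hL) (by simpa using htot)
    (by rw [List.take_append_drop]; exact hne) (by omega)
  obtain ⟨Γ1, _, π1, hπ1, hk1⟩ := level_kill ht hA hB e m (L.take i1) (L.drop i1)
    (by simpa using hTF) (by simpa using hL) (by simpa using htot)
    (by rw [List.take_append_drop]; exact hne) (by omega)
  rw [List.take_append_drop] at hk0 hk1
  obtain ⟨π, hπ⟩ : ∃ π : WW f.ker ℤ B →* Γ0 × Γ1, π = π0.prod π1 := ⟨_, rfl⟩
  have hkill : π (wword ht e L) = 1 := by
    rw [hπ, MonoidHom.prod_apply, hk0, hk1]; rfl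
  have inj0 : Function.Injective (π.comp (iot f B 0)) := by
    intro x y h
    rw [hπ] at h
    exact hπ0 (congrArg Prod.fst h)
  have inj1 : Function.Injective (π.comp (iot f B m)) := by
    intro x y h
    rw [hπ] at h
    exact hπ1 (congrArg Prod.snd h)
  obtain ⟨Γ, _, o, τ, ho, hτ1, hτ2⟩ := hnn_part (t := t) m π inj0 inj1
  obtain ⟨P, hP⟩ : ∃ P : f.ker →* Γ, P = (o.comp π).comp Coprod.inl := ⟨_, rfl⟩
  have hP' : ∀ k, o (π (Coprod.inl k)) = P k := by intro k; rw [hP]; rfl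
  have hconj : ∀ (n : ℤ) k, τ ^ n * P k = P (MulAut.conjNormal (t ^ n) k) * τ ^ n := by
    intro n
    have := tau_conj P τ (MulAut.conjNormal t) (by
      intro k; rw [← hP', ← hP', hτ1]) n
    rw [← map_zpow] at this
    exact this
  have hkk : ∀ (e : ℤ) a, MulAut.conjNormal (t ^ e) (kk ht 0 a) = kk ht e a := by
    intro e a
    apply Subtype.ext
    rw [MulAut.conjNormal_apply]
    simp only [kk]
    group
  have hkk2 : ∀ a b, kk ht 0 (a * b) = kk ht 0 a * MulAut.conjNormal (t ^ (fz f a)) (kk ht 0 b) := by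
    intro a b
    rw [hkk]
    apply Subtype.ext
    simp only [kk, Subgroup.coe_mul, fz_mul]
    group
  obtain ⟨α, hα⟩ : ∃ α : A →* Γ, ∀ a, α a = P (kk ht 0 a) * τ ^ (fz f a) := by
    refine ⟨MonoidHom.mk' (fun a => P (kk ht 0 a) * τ ^ (fz f a)) ?_, fun a => rfl⟩
    intro a b
    beta_reduce
    rw [hkk2, map_mul, fz_mul, zpow_add, mul_assoc, mul_assoc, ← mul_assoc (τ ^ fz f a),
      hconj, mul_assoc]
  obtain ⟨β, hβ⟩ : ∃ β : B →* Γ, β = (o.comp π).comp (wof 0) := ⟨_, rfl⟩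
  have hβn : ∀ n : ℕ, (n : ℤ) ≤ m → ∀ b, τ ^ (n : ℤ) * β b = o (π (wof (n : ℤ) b)) * τ ^ (n : ℤ) := by
    intro n
    induction n with
    | zero => intro _ b; rw [hβ]; simp
    | succ n ih =>
      intro hn b
      push_cast at hn ⊢
      rw [add_comm (n : ℤ) 1, zpow_add, mul_assoc, ih (by omega), ← mul_assoc, zpow_one,
        hτ2 _ (by omega) (by omega), mul_assoc, add_comm (n : ℤ) 1]
  have hmain : ∀ (L : List (A × B)) (e : ℤ),
      (∀ P Q, L = P ++ Q → 0 ≤ e + tot f P ∧ e + tot f P ≤ m) →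
      τ ^ e * altProd α β L = o (π (wword ht e L)) * τ ^ (e + tot f L) := by
    intro L
    induction L with
    | nil => intro e _; simp [wword]
    | cons x L ih =>
      intro e hlv
      have h1 := hlv [x] L rfl
      simp only [tot_cons, tot_nil, add_zero] at h1
      have h2 := ih (e + fz f x.1) (by
        intro P Q hPQ
        have := hlv (x :: P) Q (by simp [hPQ])
        rw [tot_cons, ← add_assoc] at this
        exact this)
      have h3 := hβn (e + fz f x.1).toNat (by omega) x.2
      rw [Int.toNat_of_nonneg h1.1] at h3
      rw [altProd_cons, hα, wword, map_mul, map_mul, map_mul, map_mul, tot_cons, ← add_assoc]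
      calc _ = (τ ^ e * P (kk ht 0 x.1)) * τ ^ (fz f x.1) * β x.2 * altProd α β L := by
            simp only [mul_assoc]
        _ = P (kk ht e x.1) * (τ ^ (e + fz f x.1) * β x.2) * altProd α β L := by
            rw [hconj, hkk, zpow_add]; simp only [mul_assoc]
        _ = P (kk ht e x.1) * o (π (wof (e + fz f x.1) x.2)) *
              (τ ^ (e + fz f x.1) * altProd α β L) := by
            rw [h3]; simp only [mul_assoc]
        _ = _ := by rw [h2, hP']; simp only [mul_assoc]
  refine ⟨Γ, inferInstance, α, β, ?_, ?_⟩
  · have h := hmain L e hlev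
    rw [hkill, htot, map_one, one_mul, add_zero] at h
    exact mul_eq_left.1 h
  · have hm0 : (0 : ℤ) ≠ m := by omega
    obtain ⟨κ, hκ⟩ : ∃ κ : Coprod f.ker B →* WW f.ker {n : ℤ // n ≠ m} B,
      κ = Coprod.map (MonoidHom.id _) (CoprodI.of (M := fun _ : {n : ℤ // n ≠ m} => B) (i := ⟨0, hm0⟩)) :=
      ⟨_, rfl⟩
    have iκ : Function.Injective κ := by
      obtain ⟨r, hr⟩ : ∃ r : WW f.ker {n : ℤ // n ≠ m} B →* Coprod f.ker B,
        r = Coprod.map (MonoidHom.id _) (CoprodI.lift (fun _ => MonoidHom.id B)) := ⟨_, rfl⟩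
      have h : r.comp κ = MonoidHom.id _ := by
        rw [hr, hκ]
        apply Coprod.hom_ext
        · rfl
        · refine MonoidHom.ext fun b => ?_
          simp [CoprodI.lift_of]
      exact Function.LeftInverse.injective (g := r) (fun x => DFunLike.congr_fun h x)
    have hc : Coprod.lift (α.comp f.ker.subtype) β = o.comp ((π.comp (iot f B m)).comp κ) := by
      apply Coprod.hom_ext
      · refine MonoidHom.ext fun k => ?_
        have h1 : fz f k.1 = 0 := by
          have := k.2
          rw [MonoidHom.mem_ker] at this
          simp [fz, this]
        simp only [MonoidHom.comp_apply, Coprod.lift_apply_inl, hκ, Coprod.map_apply_inl, iot, wmap_inl]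
        rw [Subgroup.coe_subtype, hα, kk_zero_of_ker, h1, ← hP']
        simp
      · refine MonoidHom.ext fun b => ?_
        simp only [MonoidHom.comp_apply, Coprod.lift_apply_inr, hκ, Coprod.map_apply_inr, iot, hβ]
        have := wmap_wof (K := f.ker) (MulEquiv.refl _).toMonoidHom (Subtype.val : {n : ℤ // n ≠ m} → ℤ) ⟨0, hm0⟩ b
        rw [wof] at this
        exact congrArg (fun x => o (π x)) this.symm
    rw [hc]
    exact ho.comp (inj1.comp iκ)

end WLsec

section TFsec

lemma altProd_map {A B A' B' Γ : Type} [Group A] [Group B] [Group A'] [Group B'] [Group Γ]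
    (u : A' →* A) (v : B' →* B) (α : A →* Γ) (β : B →* Γ) (L : List (A' × B')) :
    altProd α β (L.map (fun x => (u x.1, v x.2))) = altProd (α.comp u) (β.comp v) L := by
  induction L with
  | nil => simp
  | cons x L ih => simp [ih]

lemma altProd_one_right {A B : Type} [Group A] [Group B]
    (f : A →* Multiplicative ℤ) (E : A →* Multiplicative ℚ) (c : ℚ)
    (hE : ∀ a, (E a).toAdd = fz f a * c) (L : List (A × B)) :
    (altProd E (1 : B →* Multiplicative ℚ) L).toAdd = tot f L * c := by
  induction L with
  | nil => simp
  | cons x L ih => simp [ih, hE, add_mul]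

lemma altProd_swap {A B Γ : Type} [Group A] [Group B] [Group Γ] (α : A →* Γ) (β : B →* Γ)
    (L : List (A × B)) :
    altProd β α ((L.map (fun x => (x.2⁻¹, x.1⁻¹))).reverse) = (altProd α β L)⁻¹ := by
  induction L with
  | nil => simp
  | cons x L ih => simp [ih, altProd_append, mul_assoc]

lemma half {A B : Type} [Group A] [Group B] (hA : LocallyIndicable A) (hB : LocallyIndicable B)
    (L : List (A × B)) (hTF : ∀ q' < L.length, TF q') (hL0 : L ≠ [])
    (hL : ∀ x ∈ L, x.1 ≠ 1 ∧ x.2 ≠ 1)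
    (hgen : ∀ N : Subgroup A, (∀ x ∈ L, x.1 ∈ N) → N = ⊤) :
    ∃ (Γ : Type) (_ : Group Γ) (α : A →* Γ) (β : B →* Γ), Function.Injective β ∧
      altProd α β L = 1 := by
  have hFG : Group.FG A := by
    rw [Group.fg_iff]
    refine ⟨{a | a ∈ L.map Prod.fst}, hgen _ ?_, List.finite_toSet _⟩
    intro x hx
    apply Subgroup.subset_closure
    exact List.mem_map_of_mem hx
  have hid : (MonoidHom.id A) ≠ 1 := by
    intro h
    obtain ⟨x, hx⟩ := List.exists_mem_of_ne_nil L hL0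
    exact (hL x hx).1 (DFunLike.congr_fun h x.1)
  obtain ⟨f, hf⟩ := hA.exists_hom (MonoidHom.id A) hid
  obtain ⟨t, ht⟩ := hf (Multiplicative.ofAdd 1)
  by_cases htot : tot f L = 0
  · have hne : ∃ x ∈ L, fz f x.1 ≠ 0 := by
      by_contra hcon
      push Not at hcon
      have h1 : f.ker = ⊤ := by
        apply hgen
        intro x hx
        rw [MonoidHom.mem_ker]
        exact Multiplicative.toAdd.injective (hcon x hx)
      have h2 : t ∈ f.ker := by rw [h1]; trivial
      rw [MonoidHom.mem_ker, ht] at h2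
      have := congrArg Multiplicative.toAdd h2
      simp at this
    obtain ⟨Γ, _, α, β, h1, h2⟩ := WL ht hA hB L hTF hL htot hne
    refine ⟨Γ, inferInstance, α, β, ?_, h1⟩
    have h3 : Function.Injective (Coprod.inr : B →* Coprod f.ker B) := Coprod.inr_injective
    have h4 := h2.comp h3
    intro x y hxy
    apply h4
    simpa using hxy
  · obtain ⟨z, hz⟩ : ∃ z : A →* FreeGroup Unit,
      z = (zpowersHom (FreeGroup Unit) (FreeGroup.of ())).comp f := ⟨_, rfl⟩
    obtain ⟨Γ, _, s, F, hs, hR⟩ := howie_exists (ι := Unit) hB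
      (fun _ => altProd (Coprod.inr.comp z) Coprod.inl L) (by
        intro d
        have hq : (tot f L : ℚ) ≠ 0 := by exact_mod_cast htot
        refine ⟨FreeGroup.lift (fun _ => Multiplicative.ofAdd (d () / tot f L)), fun i => ?_⟩
        rw [map_altProd, map_altProd]
        have h1 : (FreeGroup.lift (fun _ : Unit => Multiplicative.ofAdd (d () / (tot f L : ℚ)))).comp
          ((Coprod.snd : Coprod B (FreeGroup Unit) →* _).comp Coprod.inl) = 1 := by
            refine MonoidHom.ext fun b => ?_
            simp
        rw [h1, altProd_one_right f _ (d () / tot f L)]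
        · field_simp
        · intro a
          simp [hz, zpowersHom_apply, fz])
    refine ⟨Γ, inferInstance, F.comp z, s, hs, ?_⟩
    have h1 := hR ()
    rw [map_altProd, Coprod.lift_comp_inl, ← MonoidHom.comp_assoc, Coprod.lift_comp_inr] at h1
    exact h1

theorem TF_all (q : ℕ) : TF q := by
  induction q using Nat.strong_induction_on with
  | _ q ih =>
  intro A B _ _ hA hB L hq hL0 hL
  obtain ⟨SA, hSA⟩ : ∃ S : Set A, S = {a | a ∈ L.map Prod.fst} := ⟨_, rfl⟩
  obtain ⟨SB, hSB⟩ : ∃ S : Set B, S = {a | a ∈ L.map Prod.snd} := ⟨_, rfl⟩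
  have hmA : ∀ x ∈ L, x.1 ∈ Subgroup.closure SA := by
    intro x hx
    apply Subgroup.subset_closure
    rw [hSA]; exact List.mem_map_of_mem hx
  have hmB : ∀ x ∈ L, x.2 ∈ Subgroup.closure SB := by
    intro x hx
    apply Subgroup.subset_closure
    rw [hSB]; exact List.mem_map_of_mem hx
  obtain ⟨L1, hL1⟩ : ∃ L1 : List (Subgroup.closure SA × Subgroup.closure SB),
    L1.map (fun x => ((Subgroup.closure SA).subtype x.1, (Subgroup.closure SB).subtype x.2)) = L := by
    refine ⟨L.attach.map (fun x => (⟨x.1.1, hmA _ x.2⟩, ⟨x.1.2, hmB _ x.2⟩)), ?_⟩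
    rw [List.map_map]
    conv_rhs => rw [← List.attach_map_subtype_val L]
    rfl
  have hlen : L1.length = q := by rw [← hq, ← hL1]; simp
  have hmem : ∀ x ∈ L1, (x.1.1, x.2.1) ∈ L := by
    intro x hx
    rw [← hL1]
    exact List.mem_map_of_mem (f := fun x => ((Subgroup.closure SA).subtype x.1, (Subgroup.closure SB).subtype x.2)) hx
  have hL1' : ∀ x ∈ L1, x.1 ≠ 1 ∧ x.2 ≠ 1 := by
    intro x hx
    have := hL _ (hmem x hx)
    refine ⟨fun h => this.1 ?_, fun h => this.2 ?_⟩ <;> simp [h]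
  have hL10 : L1 ≠ [] := by
    rintro rfl
    exact hL0 hL1.symm
  have hgA : ∀ N : Subgroup (Subgroup.closure SA), (∀ x ∈ L1, x.1 ∈ N) → N = ⊤ := by
    intro N hN
    rw [eq_top_iff, ← Subgroup.closure_closure_coe_preimage (k := SA), Subgroup.closure_le]
    intro y hy
    obtain ⟨x, hx, hxy⟩ : ∃ x ∈ L, x.1 = (y : A) := by
      have h0 : ∀ z ∈ SA, ∃ x ∈ L, x.1 = z := by
        rw [hSA]
        intro z hz
        exact List.mem_map.1 hz
      exact h0 _ hy
    rw [← hL1, List.mem_map] at hx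
    obtain ⟨x', hx', rfl⟩ := hx
    have : x'.1 = y := Subtype.ext hxy
    rw [← this]
    exact hN x' hx'
  have hgB : ∀ N : Subgroup (Subgroup.closure SB), (∀ x ∈ L1, x.2 ∈ N) → N = ⊤ := by
    intro N hN
    rw [eq_top_iff, ← Subgroup.closure_closure_coe_preimage (k := SB), Subgroup.closure_le]
    intro y hy
    obtain ⟨x, hx, hxy⟩ : ∃ x ∈ L, x.2 = (y : B) := by
      have h0 : ∀ z ∈ SB, ∃ x ∈ L, x.2 = z := by
        rw [hSB]
        intro z hz
        exact List.mem_map.1 hz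
      exact h0 _ hy
    rw [← hL1, List.mem_map] at hx
    obtain ⟨x', hx', rfl⟩ := hx
    have : x'.2 = y := Subtype.ext hxy
    rw [← this]
    exact hN x' hx'
  obtain ⟨Γ1, _, α1, β1, hβ1, h1⟩ := half (hA.subgroup _) (hB.subgroup _) L1
    (by rw [hlen]; exact ih) hL10 hL1' hgA
  obtain ⟨Γ2, _, β2, α2, hα2, h2⟩ := half (hB.subgroup _) (hA.subgroup _)
    ((L1.map (fun x => (x.2⁻¹, x.1⁻¹))).reverse)
    (by simpa [hlen] using ih) (by simpa using hL10) (by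
      intro x hx
      rw [List.mem_reverse, List.mem_map] at hx
      obtain ⟨y, hy, rfl⟩ := hx
      simpa [and_comm] using hL1' y hy) (by
      intro N hN
      apply hgB
      intro x hx
      have := hN (x.2⁻¹, x.1⁻¹) (by
        rw [List.mem_reverse, List.mem_map]
        exact ⟨x, hx, rfl⟩)
      simpa using this)
  rw [altProd_swap, inv_eq_one] at h2
  obtain ⟨α, hα⟩ : ∃ α : Subgroup.closure SA →* Γ1 × Γ2, α = α1.prod α2 := ⟨_, rfl⟩
  obtain ⟨β, hβ⟩ : ∃ β : Subgroup.closure SB →* Γ1 × Γ2, β = β1.prod β2 := ⟨_, rfl⟩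
  have iα : Function.Injective α := by
    intro x y h
    rw [hα] at h
    exact hα2 (congrArg Prod.snd h)
  have iβ : Function.Injective β := by
    intro x y h
    rw [hβ] at h
    exact hβ1 (congrArg Prod.fst h)
  have hrel : altProd α β L1 = 1 := by
    apply Prod.ext
    · have := map_altProd α β (MonoidHom.fst Γ1 Γ2) L1
      rw [hα, hβ, MonoidHom.fst_comp_prod, MonoidHom.fst_comp_prod, h1] at this
      rw [hα, hβ]; exact this
    · have := map_altProd α β (MonoidHom.snd Γ1 Γ2) L1
      rw [hα, hβ, MonoidHom.snd_comp_prod, MonoidHom.snd_comp_prod, h2] at this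
      rw [hα, hβ]; exact this
  obtain ⟨Δ, _, iA, k, hiA, hk, hc⟩ := exists_amalgam (Subgroup.closure SA).subtype α
    (Subgroup.subtype_injective _) iα
  obtain ⟨Δ', _, iB, k', hiB, hk', hc'⟩ := exists_amalgam (Subgroup.closure SB).subtype (k.comp β)
    (Subgroup.subtype_injective _) (hk.comp iβ)
  refine ⟨Δ', inferInstance, k'.comp iA, iB, hk'.comp hiA, hiB, ?_⟩
  rw [← hL1, altProd_map]
  have e1 : (k'.comp iA).comp (Subgroup.closure SA).subtype = (k'.comp k).comp α := by
    refine MonoidHom.ext fun x => ?_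
    exact congrArg k' (hc x)
  have e2 : iB.comp (Subgroup.closure SB).subtype = (k'.comp k).comp β := by
    refine MonoidHom.ext fun x => ?_
    exact hc' x
  rw [e1, e2, ← map_altProd, hrel, map_one]

end TFsec

section Embed

/-- Shift action on letters indexed by integers. -/
def shiftAct (β : Type) : Multiplicative ℤ →* MulAut (FreeGroup (β × ℤ)) :=
  MonoidHom.mk' (fun n => FreeGroup.freeGroupCongr
    ((Equiv.refl β).prodCongr (Equiv.addLeft (Multiplicative.toAdd n)))) (by
    intro a b
    apply MulEquiv.ext
    intro w
    have : ((FreeGroup.freeGroupCongr ((Equiv.refl β).prodCongr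
        (Equiv.addLeft (Multiplicative.toAdd (a * b))))).toMonoidHom) =
      ((FreeGroup.freeGroupCongr ((Equiv.refl β).prodCongr
        (Equiv.addLeft (Multiplicative.toAdd a)))).toMonoidHom).comp
      ((FreeGroup.freeGroupCongr ((Equiv.refl β).prodCongr
        (Equiv.addLeft (Multiplicative.toAdd b)))).toMonoidHom) := by
      apply FreeGroup.ext_hom
      intro z
      simp [add_assoc]
      rfl
    exact DFunLike.congr_fun this w)

lemma shiftAct_of {β : Type} (n : Multiplicative ℤ) (z : β × ℤ) :
    shiftAct β n (FreeGroup.of z) = FreeGroup.of (z.1, n.toAdd + z.2) := by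
  simp [shiftAct]
  rfl

lemma norm_shiftAct {β : Type} [DecidableEq β] (n : Multiplicative ℤ) (w : FreeGroup (β × ℤ)) :
    (shiftAct β n w).norm ≤ w.norm := by
  have h : shiftAct β n w = FreeGroup.map (fun z : β × ℤ => (z.1, n.toAdd + z.2)) w := by
    have : (shiftAct β n).toMonoidHom = FreeGroup.map (fun z : β × ℤ => (z.1, n.toAdd + z.2)) := by
      apply FreeGroup.ext_hom
      intro z
      simp [shiftAct_of]
    exact DFunLike.congr_fun this w
  rw [h]
  conv_lhs => rw [← FreeGroup.mk_toWord (x := w)]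
  rw [FreeGroup.map.mk]
  refine FreeGroup.norm_mk_le.trans ?_
  simp [FreeGroup.norm]

lemma pow_letter_injective {β : Type} [DecidableEq β] (x : β) (c : ℤ) (hc : c ≠ 0) :
    Function.Injective (FreeGroup.lift (fun z : β => if z = x then (FreeGroup.of x) ^ c else FreeGroup.of z)) := by
  have hx : Function.Injective (zpowersHom (FreeGroup β) (FreeGroup.of x)) := by
    rw [injective_iff_map_eq_one]
    intro n hn
    rw [zpowersHom_apply] at hn
    have := (IsMulTorsionFree.zpow_eq_one_iff_right (FreeGroup.of_ne_one x)).1 hn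
    exact Multiplicative.toAdd.injective this
  have hc' : Function.Injective (zpowersHom (Multiplicative ℤ) (Multiplicative.ofAdd c)) := by
    rw [injective_iff_map_eq_one]
    intro n hn
    rw [zpowersHom_apply] at hn
    have := congrArg Multiplicative.toAdd hn
    simp [hc] at this
    exact this
  obtain ⟨Δ, _, i, k, hi, hk, h⟩ := exists_amalgam _ _ hc' hx
  have h1 : i (Multiplicative.ofAdd 1) ^ c = k (FreeGroup.of x) := by
    have := h (Multiplicative.ofAdd 1)
    simp only [zpowersHom_apply, toAdd_ofAdd, zpow_one] at this
    rw [← this, ← map_zpow]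
    congr 1
    apply Multiplicative.toAdd.injective
    simp
  obtain ⟨o, ho⟩ : ∃ o : FreeGroup β →* Δ, o = FreeGroup.lift
    (fun z => if z = x then i (Multiplicative.ofAdd 1) else k (FreeGroup.of z)) := ⟨_, rfl⟩
  have hcomp : o.comp (FreeGroup.lift (fun z : β => if z = x then (FreeGroup.of x) ^ c else FreeGroup.of z)) = k := by
    apply FreeGroup.ext_hom
    intro z
    rw [MonoidHom.comp_apply, FreeGroup.lift_apply_of]
    split_ifs with hz
    · rw [map_zpow, ho, FreeGroup.lift_apply_of, if_pos rfl, h1, hz]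
    · rw [ho, FreeGroup.lift_apply_of, if_neg hz]
  rw [← hcomp] at hk
  exact Function.Injective.of_comp hk

lemma exists_Xi {β : Type} [DecidableEq β] (F : FreeGroup β →* Multiplicative ℤ) (x : β)
    (hx : fz F (FreeGroup.of x) ≠ 0) :
    ∃ Ξ : FreeGroup β →* (FreeGroup (β × ℤ)) ⋊[shiftAct β] (Multiplicative ℤ),
      Function.Injective Ξ ∧ (∀ w, (Ξ w).right = F w) ∧
      ∀ w : FreeGroup β, (Ξ w).left.norm ≤ (w.toWord.filter (fun y => y.1 ≠ x)).length := by
  obtain ⟨Ξ, hΞ⟩ : ∃ Ξ : FreeGroup β →* (FreeGroup (β × ℤ)) ⋊[shiftAct β] (Multiplicative ℤ),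
    ∀ z, Ξ (FreeGroup.of z) = ⟨if z = x then 1 else FreeGroup.of (z, 0), F (FreeGroup.of z)⟩ :=
    ⟨FreeGroup.lift (fun z => ⟨if z = x then 1 else FreeGroup.of (z, 0), F (FreeGroup.of z)⟩),
      fun z => by rw [FreeGroup.lift_apply_of]⟩
  obtain ⟨fn, hfn⟩ : ∃ fn : FreeGroup (β × ℤ) →* FreeGroup β,
    ∀ q, fn (FreeGroup.of q) = FreeGroup.of x ^ q.2 * FreeGroup.of q.1 * (FreeGroup.of x ^ q.2)⁻¹ :=
    ⟨FreeGroup.lift (fun q => FreeGroup.of x ^ q.2 * FreeGroup.of q.1 * (FreeGroup.of x ^ q.2)⁻¹),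
      fun q => by rw [FreeGroup.lift_apply_of]⟩
  obtain ⟨Θ, hΘ⟩ : ∃ Θ : (FreeGroup (β × ℤ)) ⋊[shiftAct β] (Multiplicative ℤ) →* FreeGroup β,
    ∀ g, Θ g = fn g.left * FreeGroup.of x ^ g.right.toAdd := by
    refine ⟨SemidirectProduct.lift fn (zpowersHom (FreeGroup β) (FreeGroup.of x)) ?_, ?_⟩
    · intro g
      apply FreeGroup.ext_hom
      intro q
      simp only [MonoidHom.comp_apply, MulEquiv.coe_toMonoidHom, shiftAct_of, hfn, MulAut.conj_apply,
        zpowersHom_apply, zpow_add]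
      group
    · intro g
      rfl
  refine ⟨Ξ, ?_, ?_, ?_⟩
  · obtain ⟨ν, hν⟩ : ∃ ν : FreeGroup β →* FreeGroup β, ∀ z, ν (FreeGroup.of z) =
      if z = x then FreeGroup.of x else FreeGroup.of z * (FreeGroup.of x ^ (fz F (FreeGroup.of z)))⁻¹ :=
      ⟨FreeGroup.lift (fun z => if z = x then FreeGroup.of x else
        FreeGroup.of z * (FreeGroup.of x ^ (fz F (FreeGroup.of z)))⁻¹), fun z => by rw [FreeGroup.lift_apply_of]⟩
    have hcomp : (ν.comp Θ).comp Ξ = FreeGroup.lift (fun z : β => if z = x then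
        (FreeGroup.of x) ^ (fz F (FreeGroup.of x)) else FreeGroup.of z) := by
      apply FreeGroup.ext_hom
      intro z
      rw [FreeGroup.lift_apply_of, MonoidHom.comp_apply, MonoidHom.comp_apply, hΞ, hΘ]
      by_cases hz : z = x
      · subst hz
        simp [hν, fz]
      · simp [hz, hν, hfn, fz]
    have := pow_letter_injective x _ hx
    rw [← hcomp] at this
    exact Function.Injective.of_comp (f := ν.comp Θ) this
  · intro w
    have : SemidirectProduct.rightHom.comp Ξ = F := by
      apply FreeGroup.ext_hom
      intro z
      rw [MonoidHom.comp_apply, hΞ]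
      rfl
    exact DFunLike.congr_fun this w
  · have key : ∀ l : List (β × Bool), (Ξ (FreeGroup.mk l)).left.norm ≤
        (l.filter (fun y => y.1 ≠ x)).length := by
      intro l
      induction l with
      | nil =>
        rw [← FreeGroup.one_eq_mk, map_one]; simp
      | cons y l ih =>
        have h1 : FreeGroup.mk (y :: l) = FreeGroup.mk [y] * FreeGroup.mk l := by
          rw [FreeGroup.mul_mk]; rfl
        have h2 : (Ξ (FreeGroup.mk [y])).left.norm ≤ if y.1 ≠ x then 1 else 0 := by
          obtain ⟨z, b⟩ := y
          cases b with
          | true =>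
            rw [show FreeGroup.mk [(z, true)] = FreeGroup.of z from rfl, hΞ]
            by_cases hz : z = x <;> simp [hz]
          | false =>
            rw [show FreeGroup.mk [(z, false)] = (FreeGroup.of z)⁻¹ from rfl, map_inv, hΞ,
              SemidirectProduct.inv_left]
            refine (norm_shiftAct _ _).trans ?_
            by_cases hz : z = x <;> simp [hz]
        have h3 : ((y :: l).filter (fun y => y.1 ≠ x)).length =
            (if y.1 ≠ x then 1 else 0) + (l.filter (fun y => y.1 ≠ x)).length := by
          by_cases hz : y.1 = x <;> simp [hz, add_comm]
        rw [h1, map_mul, SemidirectProduct.mul_left, h3]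
        refine (FreeGroup.norm_mul_le _ _).trans (add_le_add h2 ((norm_shiftAct _ _).trans ih))
    intro w
    have := key w.toWord
    rwa [FreeGroup.mk_toWord] at this

end Embed

section MainInd

/-- The conclusion of the main induction. -/
def Good {A H : Type} [Group A] [Group H] (p : A) (L : List (A × H)) : Prop :=
  ∃ (Γ : Type) (_ : Group Γ) (α : A →* Γ) (η : H →* Γ), altProd α η L = 1 ∧
    Function.Injective (Coprod.lift (zpowersHom Γ (α p)) η)

/-- Exponent sum of a letter. -/
def ex {β : Type} [DecidableEq β] (y : β) : FreeGroup β →* Multiplicative ℤ :=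
  FreeGroup.lift (fun z => Multiplicative.ofAdd (if z = y then 1 else 0))

lemma fz_ex {β : Type} [DecidableEq β] (y z : β) : fz (ex y) (FreeGroup.of z) = if z = y then 1 else 0 := by
  simp [fz, ex]

lemma zpowersHom_inj {A : Type} [Group A] {β : Type} (j : A →* FreeGroup β) (hj : Function.Injective j)
    (p : A) (hp : p ≠ 1) (K : Type) [Group K] (i : K →* A) (p' : K) (hp' : i p' = p) :
    Function.Injective (zpowersHom K p') := by
  rw [injective_iff_map_eq_one]
  intro n hn
  rw [zpowersHom_apply] at hn
  have h1 : j p ^ n.toAdd = 1 := by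
    rw [← hp', ← map_zpow, ← map_zpow, hn, map_one, map_one]
  have h2 : j p ≠ 1 := by
    intro h; exact hp (hj (by rw [h, map_one]))
  have := (IsMulTorsionFree.zpow_eq_one_iff_right h2).1 h1
  exact Multiplicative.toAdd.injective this

variable {A H β : Type} [Group A] [Group H] (j : A →* FreeGroup β)

lemma caseA (hH : LocallyIndicable H) (p : A) (L : List (A × H))
    (h : ∀ d1 d2 : ℚ, ∃ E : FreeGroup β →* Multiplicative ℚ, (E (j p)).toAdd = d1 ∧
      (altProd (E.comp j) (1 : H →* Multiplicative ℚ) L).toAdd = d2) : Good p L := by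
  have hS : LocallyIndicable (Coprod (Multiplicative ℤ) H) := locallyIndicable_int.coprod hH
  obtain ⟨Γ, _, s, F, hs, hR⟩ := howie_exists (ι := Bool) (β := β) hS
    (fun b => if b = true then Coprod.inr (j p) *
        (Coprod.inl (Coprod.inl (Multiplicative.ofAdd 1) : Coprod (Multiplicative ℤ) H) :
          Coprod (Coprod (Multiplicative ℤ) H) (FreeGroup β))⁻¹
      else altProd (Coprod.inr.comp j) (Coprod.inl.comp Coprod.inr) L) (by
      intro d
      obtain ⟨E, h1, h2⟩ := h (d true) (d false)
      refine ⟨E, fun b => ?_⟩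
      cases b with
      | true => simp [h1]
      | false =>
        rw [if_neg (by simp), map_altProd, map_altProd, ← h2]
        congr 2
        refine MonoidHom.ext fun b => ?_
        simp)
  have h1 := hR true
  have h2 := hR false
  rw [if_pos rfl, map_mul, map_inv, Coprod.lift_apply_inl, Coprod.lift_apply_inr, mul_inv_eq_one] at h1
  rw [if_neg (by simp), map_altProd, ← MonoidHom.comp_assoc, ← MonoidHom.comp_assoc,
    Coprod.lift_comp_inl, Coprod.lift_comp_inr] at h2
  refine ⟨Γ, inferInstance, F.comp j, s.comp Coprod.inr, h2, ?_⟩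
  have h3 : Coprod.lift (zpowersHom Γ ((F.comp j) p)) (s.comp Coprod.inr) = s := by
    apply Coprod.hom_ext
    · refine MonoidHom.ext fun n => ?_
      rw [MonoidHom.comp_apply, Coprod.lift_apply_inl, zpowersHom_apply, MonoidHom.comp_apply, h1,
        MonoidHom.comp_apply, ← map_zpow, ← map_zpow]
      congr 2
      apply Multiplicative.toAdd.injective
      simp
    · rw [Coprod.lift_comp_inr]
  rw [h3]; exact hs

lemma caseY (hj : Function.Injective j) (hH : LocallyIndicable H) (p : A) (hp1 : p ≠ 1) (L : List (A × H))
    (hL : ∀ x ∈ L, x.1 ≠ 1 ∧ x.2 ≠ 1) (F : A →* Multiplicative ℤ) (hFp : fz F p = 0)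
    (hFt : tot F L = 0) (hF : ∃ x ∈ L, fz F x.1 ≠ 0) : Good p L := by
  have hA : LocallyIndicable A := LocallyIndicable.of_injective j hj (locallyIndicable_freeGroup β)
  obtain ⟨x0, hx0, hx0'⟩ := hF
  have hF1 : F ≠ 1 := by
    rintro rfl
    exact hx0' rfl
  obtain ⟨g, d, hg, hd, hgd⟩ := normalize_hom F hF1
  have hgd' : ∀ x, fz F x = d * fz g x := hgd
  have htot : ∀ L : List (A × H), tot F L = d * tot g L := by
    intro L
    induction L with
    | nil => simp
    | cons x L ih => simp [ih, hgd', mul_add]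
  obtain ⟨t, ht⟩ := hg (Multiplicative.ofAdd 1)
  have hpk : p ∈ g.ker := by
    rw [MonoidHom.mem_ker]
    rw [hgd'] at hFp
    exact Multiplicative.toAdd.injective ((mul_eq_zero.1 hFp).resolve_left hd)
  obtain ⟨Γ, _, α, η, h1, h2⟩ := WL ht hA hH L (fun q _ => TF_all q) hL
    (by rw [htot] at hFt; exact (mul_eq_zero.1 hFt).resolve_left hd)
    ⟨x0, hx0, fun h => hx0' (by rw [hgd', h, mul_zero])⟩
  refine ⟨Γ, inferInstance, α, η, h1, ?_⟩
  have h3 : Coprod.lift (zpowersHom Γ (α p)) η =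
      (Coprod.lift (α.comp g.ker.subtype) η).comp
        (Coprod.map (zpowersHom g.ker ⟨p, hpk⟩) (MonoidHom.id H)) := by
    apply Coprod.hom_ext
    · refine MonoidHom.ext fun n => ?_
      simp [zpowersHom_apply]
    · refine MonoidHom.ext fun n => ?_
      simp
  rw [h3]
  exact h2.comp (coprod_map_injective _ (zpowersHom_inj j hj p hp1 g.ker g.ker.subtype ⟨p, hpk⟩ rfl))

lemma caseX_lift (hj : Function.Injective j) (hH : LocallyIndicable H) (A' : Subgroup A)
    (p' : A') (L' : List (A' × H)) (hL' : ∀ x ∈ L', x.1 ≠ 1 ∧ x.2 ≠ 1) (hne : L' ≠ [])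
    (h : Good p' L') : Good (p' : A) (L'.map (fun x => (A'.subtype x.1, MonoidHom.id H x.2))) := by
  have hA : LocallyIndicable A := LocallyIndicable.of_injective j hj (locallyIndicable_freeGroup β)
  obtain ⟨Γ1, _, α1, η1, h1, hi1⟩ := h
  obtain ⟨Γ2, _, α2, η2, hα2, hη2, h2⟩ := TF_all _ A' H (hA.subgroup _) hH L' rfl hne hL'
  obtain ⟨α, hα⟩ : ∃ α : A' →* Γ1 × Γ2, α = α1.prod α2 := ⟨_, rfl⟩
  obtain ⟨η, hη⟩ : ∃ η : H →* Γ1 × Γ2, η = η1.prod η2 := ⟨_, rfl⟩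
  have iα : Function.Injective α := by
    intro x y h
    rw [hα] at h
    exact hα2 (congrArg Prod.snd h)
  have hrel : altProd α η L' = 1 := by
    apply Prod.ext
    · have := map_altProd α η (MonoidHom.fst Γ1 Γ2) L'
      rw [hα, hη, MonoidHom.fst_comp_prod, MonoidHom.fst_comp_prod, h1] at this
      rw [hα, hη]; exact this
    · have := map_altProd α η (MonoidHom.snd Γ1 Γ2) L'
      rw [hα, hη, MonoidHom.snd_comp_prod, MonoidHom.snd_comp_prod, h2] at this
      rw [hα, hη]; exact this
  obtain ⟨Δ, _, i, k, hi, hk, hc⟩ := exists_amalgam A'.subtype α (Subgroup.subtype_injective _) iα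
  refine ⟨Δ, inferInstance, i, k.comp η, ?_, ?_⟩
  · rw [altProd_map]
    have e1 : i.comp A'.subtype = k.comp α := MonoidHom.ext hc
    rw [e1, MonoidHom.comp_id, ← map_altProd, hrel, map_one]
  · have e2 : Coprod.lift (zpowersHom Δ (i p')) (k.comp η) =
        k.comp (Coprod.lift (zpowersHom _ (α p')) η) := by
      apply Coprod.hom_ext
      · refine MonoidHom.ext fun n => ?_
        have := hc p'
        rw [Subgroup.coe_subtype] at this
        simp [zpowersHom_apply, this]
      · refine MonoidHom.ext fun n => ?_
        simp
    have e3 : (MonoidHom.fst Γ1 Γ2).comp (Coprod.lift (zpowersHom _ (α p')) η) =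
        Coprod.lift (zpowersHom Γ1 (α1 p')) η1 := by
      apply Coprod.hom_ext
      · refine MonoidHom.ext fun n => ?_
        simp [zpowersHom_apply, hα]
      · refine MonoidHom.ext fun n => ?_
        simp [hη]
    rw [e2]
    refine hk.comp ?_
    rw [← e3] at hi1
    exact Function.Injective.of_comp (f := MonoidHom.fst Γ1 Γ2) hi1

lemma one_letter {β : Type} [DecidableEq β] (y : β) (w : FreeGroup β)
    (h : ∀ z ∈ w.toWord, z.1 = y) : ∃ k : ℤ, w = FreeGroup.of y ^ k := by
  have key : ∀ l : List (β × Bool), (∀ z ∈ l, z.1 = y) → ∃ k : ℤ, FreeGroup.mk l = FreeGroup.of y ^ k := by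
    intro l
    induction l with
    | nil => intro _; exact ⟨0, by simp [FreeGroup.one_eq_mk]⟩
    | cons z l ih =>
      intro hl
      obtain ⟨k, hk⟩ := ih (fun z hz => hl z (List.mem_cons_of_mem _ hz))
      have h1 : FreeGroup.mk (z :: l) = FreeGroup.mk [z] * FreeGroup.mk l := by
        rw [FreeGroup.mul_mk]; rfl
      have h2 := hl z List.mem_cons_self
      obtain ⟨z, b⟩ := z
      simp only at h2
      subst h2
      cases b with
      | true => exact ⟨1 + k, by rw [h1, hk, zpow_add, zpow_one]; rfl⟩
      | false => exact ⟨-1 + k, by rw [h1, hk, zpow_add, zpow_neg_one]; rfl⟩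
  obtain ⟨k, hk⟩ := key w.toWord h
  exact ⟨k, by rw [← hk, FreeGroup.mk_toWord]⟩

lemma one_letter_mem (hj : Function.Injective j) (p : A)
    (hp : ∀ (s : A) (k : ℕ), 2 ≤ k → p ≠ s ^ k) (a : A) (y : β) (k l : ℤ)
    (hk : j p = FreeGroup.of y ^ k) (hl : j a = FreeGroup.of y ^ l) : a ∈ Subgroup.zpowers p := by
  have hk0 : k ≠ 0 := by
    rintro rfl
    apply hp 1 2 le_rfl
    apply hj
    simp [hk]
  obtain ⟨u, hu⟩ : ∃ u, k = (Int.gcd k l : ℤ) * u := Int.gcd_dvd_left _ _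
  obtain ⟨s, hs⟩ : ∃ s : A, j s = FreeGroup.of y ^ (Int.gcd k l : ℤ) := by
    refine ⟨p ^ (Int.gcdA k l) * a ^ (Int.gcdB k l), ?_⟩
    rw [map_mul, map_zpow, map_zpow, hk, hl, ← zpow_mul, ← zpow_mul, ← zpow_add, Int.gcd_eq_gcd_ab]
  have hps : p = s ^ u := by
    apply hj
    rw [map_zpow, hs, hk, ← zpow_mul, ← hu]
  have hu1 : u.natAbs = 1 := by
    by_contra hne
    have hu0 : u ≠ 0 := by rintro rfl; simp at hu; exact hk0 hu
    have h2 : 2 ≤ u.natAbs := by omega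
    rcases Int.natAbs_eq u with h | h
    · apply hp s _ h2
      conv_lhs => rw [hps, h]
      rw [zpow_natCast]
    · apply hp s⁻¹ _ h2
      conv_lhs => rw [hps, h]
      rw [zpow_neg, zpow_natCast, inv_pow]
  have hdvd : k ∣ l := by
    have h1 : (Int.gcd k l : ℤ) ∣ l := Int.gcd_dvd_right _ _
    have h3 : k ∣ (Int.gcd k l : ℤ) := by
      refine ⟨u, ?_⟩
      have : u * u = 1 := by rcases Int.natAbs_eq u with h | h <;> rw [h, hu1] <;> simp
      calc (Int.gcd k l : ℤ) = (Int.gcd k l : ℤ) * (u * u) := by rw [this, mul_one]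
        _ = (Int.gcd k l : ℤ) * u * u := by ring
        _ = k * u := by rw [← hu]
    exact h3.trans h1
  obtain ⟨c, hc⟩ := hdvd
  refine ⟨c, hj ?_⟩
  simp only [map_zpow]
  rw [hk, hl, hc, zpow_mul]

lemma altProd_two {A : Type} [Group A] (f1 f2 : A →* Multiplicative ℤ) (q1 q2 : ℚ)
    (E : A →* Multiplicative ℚ) (hE : ∀ a, (E a).toAdd = q1 * fz f1 a + q2 * fz f2 a) (L : List (A × H)) :
    (altProd E (1 : H →* Multiplicative ℚ) L).toAdd = q1 * tot f1 L + q2 * tot f2 L := by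
  induction L with
  | nil => simp
  | cons x L ih =>
    simp only [altProd_cons, toAdd_mul, ih, hE, tot_cons, MonoidHom.one_apply, toAdd_one]
    push_cast
    ring

lemma exists_comb {G : Type} [Group G] (f1 f2 : G →* Multiplicative ℤ) (c1 c2 : ℤ) :
    ∃ F : G →* Multiplicative ℤ, ∀ a, fz F a = c1 * fz f1 a + c2 * fz f2 a := by
  refine ⟨MonoidHom.mk' (fun a => Multiplicative.ofAdd (c1 * fz f1 a + c2 * fz f2 a)) ?_, fun a => rfl⟩
  intro a b
  beta_reduce
  rw [← ofAdd_add, fz_mul, fz_mul]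
  congr 1
  ring

lemma exists_combQ {G : Type} [Group G] (f1 f2 : G →* Multiplicative ℤ) (c1 c2 : ℚ) :
    ∃ F : G →* Multiplicative ℚ, ∀ a, (F a).toAdd = c1 * fz f1 a + c2 * fz f2 a := by
  refine ⟨MonoidHom.mk' (fun a => Multiplicative.ofAdd (c1 * fz f1 a + c2 * fz f2 a)) ?_, fun a => rfl⟩
  intro a b
  beta_reduce
  rw [← ofAdd_add, fz_mul, fz_mul]
  congr 1
  push_cast
  ring

/-- Either case A applies or there is a useful integer weight. -/
lemma exists_weight [DecidableEq β] (hH : LocallyIndicable H) (p : A) (L : List (A × H)) (x x' : β) (hxx : x ≠ x') :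
    Good p L ∨ ∃ F : FreeGroup β →* Multiplicative ℤ, fz F (j p) = 0 ∧ tot (F.comp j) L = 0 ∧
      (fz F (FreeGroup.of x) ≠ 0 ∨ fz F (FreeGroup.of x') ≠ 0) := by
  obtain ⟨a, ha⟩ : ∃ a, a = fz (ex x) (j p) := ⟨_, rfl⟩
  obtain ⟨b, hb⟩ : ∃ b, b = fz (ex x') (j p) := ⟨_, rfl⟩
  obtain ⟨c, hc⟩ : ∃ c, c = tot ((ex x).comp j) L := ⟨_, rfl⟩
  obtain ⟨d, hd⟩ : ∃ d, d = tot ((ex x').comp j) L := ⟨_, rfl⟩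
  by_cases hdet : a * d - b * c = 0
  · right
    have mk : ∀ c1 c2 : ℤ, c1 * a + c2 * b = 0 → c1 * c + c2 * d = 0 → (c1 ≠ 0 ∨ c2 ≠ 0) →
        ∃ F : FreeGroup β →* Multiplicative ℤ, fz F (j p) = 0 ∧ tot (F.comp j) L = 0 ∧
      (fz F (FreeGroup.of x) ≠ 0 ∨ fz F (FreeGroup.of x') ≠ 0) := by
      intro c1 c2 h1 h2 h3
      obtain ⟨F, hF⟩ := exists_comb (ex x) (ex x') c1 c2
      refine ⟨F, by rw [hF, ← ha, ← hb, h1], ?_, ?_⟩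
      · have : ∀ L : List (A × H), tot (F.comp j) L =
            c1 * tot ((ex x).comp j) L + c2 * tot ((ex x').comp j) L := by
          intro L
          induction L with
          | nil => simp
          | cons y L ih =>
            rw [tot_cons, tot_cons, tot_cons, ih]
            have : fz (F.comp j) y.1 = c1 * fz ((ex x).comp j) y.1 + c2 * fz ((ex x').comp j) y.1 :=
              hF (j y.1)
            rw [this]; ring
        rw [this, ← hc, ← hd, h2]
      · simpa [hF, fz_ex, hxx, hxx.symm] using h3
    by_cases h1 : a = 0 ∧ b = 0
    · by_cases h2 : c = 0 ∧ d = 0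
      · exact mk 1 0 (by simp [h1]) (by simp [h2]) (by simp)
      · refine mk d (-c) (by simp [h1]) (by ring) ?_
        by_contra hcon
        push Not at hcon
        exact h2 ⟨by simpa using hcon.2, hcon.1⟩
    · refine mk b (-a) (by ring) (by linarith) ?_
      by_contra hcon
      push Not at hcon
      exact h1 ⟨by simpa using hcon.2, hcon.1⟩
  · left
    apply caseA j hH
    intro d1 d2
    have hq : (a * d - b * c : ℚ) ≠ 0 := by exact_mod_cast hdet
    obtain ⟨E, hE⟩ := exists_combQ (ex x) (ex x') ((d1 * d - d2 * b) / (a * d - b * c))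
      ((a * d2 - c * d1) / (a * d - b * c))
    refine ⟨E, ?_, ?_⟩
    · rw [hE, ← ha, ← hb]
      rw [div_mul_eq_mul_div, div_mul_eq_mul_div, ← add_div, div_eq_iff hq]
      ring
    · rw [altProd_two ((ex x).comp j) ((ex x').comp j) _ _ _ (fun a => hE (j a)), ← hc, ← hd]
      rw [div_mul_eq_mul_div, div_mul_eq_mul_div, ← add_div, div_eq_iff hq]
      ring

theorem main_ind (n : ℕ) : ∀ (A H β : Type) [Group A] [Group H] [DecidableEq β]
    (j : A →* FreeGroup β) (_ : Function.Injective j) (_ : LocallyIndicable H)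
    (p : A) (_ : ∀ (s : A) (k : ℕ), 2 ≤ k → p ≠ s ^ k) (L : List (A × H))
    (_ : ∀ x ∈ L, x.1 ≠ 1 ∧ x.2 ≠ 1) (_ : ∃ x ∈ L, x.1 ∉ Subgroup.zpowers p)
    (_ : ((p :: L.map Prod.fst).map (fun a => (j a).norm)).sum ≤ n), Good p L := by
  induction n with
  | zero =>
    intro A H β _ _ _ j hj hH p hp L hL hx hn
    exfalso
    simp only [List.map_cons, List.sum_cons] at hn
    have h1 : (j p).norm = 0 := by omega
    rw [FreeGroup.norm_eq_zero] at h1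
    exact hp 1 2 le_rfl (hj (by simp [h1]))
  | succ n ih =>
    intro A H β _ _ _ j hj hH p hp L hL hx hn
    have hp1 : p ≠ 1 := by
      rintro rfl
      exact hp 1 2 le_rfl (by simp)
    obtain ⟨S, hS⟩ : ∃ S, S = p :: L.map Prod.fst := ⟨_, rfl⟩
    by_cases hsupp : ∃ x x' : β, x ≠ x' ∧ (∃ a ∈ S, ∃ z ∈ (j a).toWord, z.1 = x) ∧
        (∃ a ∈ S, ∃ z ∈ (j a).toWord, z.1 = x')
    · obtain ⟨x, x', hxx, hsx, hsx'⟩ := hsupp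
      rcases exists_weight j hH p L x x' hxx with h | ⟨F, hFp, hFt, hFx⟩
      · exact h
      by_cases hY : ∃ y ∈ L, fz (F.comp j) y.1 ≠ 0
      · exact caseY j hj hH p hp1 L hL (F.comp j) hFp hFt hY
      push Not at hY
      obtain ⟨x, hsx, hFx⟩ : ∃ x, (∃ a ∈ S, ∃ z ∈ (j a).toWord, z.1 = x) ∧
          fz F (FreeGroup.of x) ≠ 0 := by
        rcases hFx with h | h
        · exact ⟨x, hsx, h⟩
        · exact ⟨x', hsx', h⟩
      obtain ⟨Ξ, hΞ, hΞr, hΞn⟩ := exists_Xi F x hFx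
      have hmem : ∀ y ∈ L, y.1 ∈ (F.comp j).ker := by
        intro y hy
        rw [MonoidHom.mem_ker]
        exact Multiplicative.toAdd.injective (hY y hy)
      have hpm : p ∈ (F.comp j).ker := by
        rw [MonoidHom.mem_ker]
        exact Multiplicative.toAdd.injective hFp
      obtain ⟨L', hL'⟩ : ∃ L' : List ((F.comp j).ker × H),
          L'.map (fun x => ((F.comp j).ker.subtype x.1, MonoidHom.id H x.2)) = L := by
        refine ⟨L.attach.map (fun x => (⟨x.1.1, hmem _ x.2⟩, x.1.2)), ?_⟩
        rw [List.map_map]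
        conv_rhs => rw [← List.attach_map_subtype_val L]
        rfl
      have hmem' : ∀ x ∈ L', (x.1.1, x.2) ∈ L := by
        intro x hx
        rw [← hL']
        exact List.mem_map_of_mem
          (f := fun x : (F.comp j).ker × H => ((F.comp j).ker.subtype x.1, MonoidHom.id H x.2)) hx
      have hL'' : ∀ x ∈ L', x.1 ≠ 1 ∧ x.2 ≠ 1 := by
        intro x hx
        have := hL _ (hmem' x hx)
        exact ⟨fun h => this.1 (by simp [h]), this.2⟩
      have hΞ1 : ∀ a : (F.comp j).ker, (Ξ (j a.1)).right = 1 := by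
        intro a
        rw [hΞr]
        exact a.2
      obtain ⟨j', hj'⟩ : ∃ j' : (F.comp j).ker →* FreeGroup (β × ℤ), ∀ a, j' a = (Ξ (j a.1)).left := by
        refine ⟨MonoidHom.mk' (fun a => (Ξ (j a.1)).left) ?_, fun a => rfl⟩
        intro a b
        beta_reduce
        rw [Subgroup.coe_mul, map_mul, map_mul, SemidirectProduct.mul_left, hΞ1, map_one]
        rfl
      have hj'i : Function.Injective j' := by
        intro a b hab
        rw [hj', hj'] at hab
        have : Ξ (j a.1) = Ξ (j b.1) := SemidirectProduct.ext hab (by rw [hΞ1, hΞ1])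
        exact Subtype.ext (hj (hΞ this))
      have hne : L' ≠ [] := by
        rintro rfl
        obtain ⟨y, hy, -⟩ := hx
        rw [← hL'] at hy
        simp at hy
      have hgood : Good (⟨p, hpm⟩ : (F.comp j).ker) L' := by
        refine ih _ H (β × ℤ) j' hj'i hH ⟨p, hpm⟩ ?_ L' hL'' ?_ ?_
        · intro s k hk h
          exact hp s.1 k hk (congrArg Subtype.val h)
        · obtain ⟨y, hy, hyp⟩ := hx
          rw [← hL', List.mem_map] at hy
          obtain ⟨y', hy', rfl⟩ := hy
          refine ⟨y', hy', ?_⟩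
          rintro ⟨c, hc⟩
          exact hyp ⟨c, congrArg Subtype.val hc⟩
        · rw [Nat.le_iff_lt_add_one]
          refine lt_of_lt_of_le ?_ hn
          have hSL : p :: L.map Prod.fst =
              ((⟨p, hpm⟩ : (F.comp j).ker) :: L'.map Prod.fst).map (fun a => a.1) := by
            rw [← hL']
            simp [List.map_map, Function.comp_def]
          have hle : ∀ a : (F.comp j).ker, (j' a).norm ≤ (j a.1).norm := by
            intro a
            rw [hj']
            exact (hΞn _).trans (List.length_filter_le _ _)
          rw [hSL, List.map_map]
          apply List.sum_lt_sum
          · intro a _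
            exact hle a
          · obtain ⟨a, ha, z, hz, hzx⟩ := hsx
            rw [hS, hSL, List.mem_map] at ha
            obtain ⟨a', ha', rfl⟩ := ha
            refine ⟨a', ha', ?_⟩
            rw [hj']
            refine lt_of_le_of_lt (hΞn _) ?_
            simp only [Function.comp_apply, FreeGroup.norm]
            rw [List.length_filter_lt_length_iff_exists]
            exact ⟨z, hz, by simp [hzx]⟩
      have := caseX_lift j hj hH _ _ L' hL'' hne hgood
      rw [hL'] at this
      exact this
    · exfalso
      have hjp : (j p).toWord ≠ [] := by
        rw [ne_eq, FreeGroup.toWord_eq_nil_iff]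
        intro h
        exact hp1 (hj (by rw [h, map_one]))
      obtain ⟨z, hz⟩ := List.exists_mem_of_ne_nil _ hjp
      have hall : ∀ a ∈ S, ∀ z' ∈ (j a).toWord, z'.1 = z.1 := by
        intro a ha z' hz'
        by_contra hne
        exact hsupp ⟨z'.1, z.1, hne, ⟨a, ha, z', hz', rfl⟩, ⟨p, by simp [hS], z, hz, rfl⟩⟩
      obtain ⟨y, hy, hyp⟩ := hx
      obtain ⟨k, hk⟩ := one_letter z.1 _ (hall p (by simp [hS]))
      obtain ⟨l, hl⟩ := one_letter z.1 _ (hall y.1 (by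
        rw [hS]; exact List.mem_cons_of_mem _ (List.mem_map_of_mem hy)))
      exact hyp (one_letter_mem j hj p hp y.1 z.1 k l hk hl)

end MainInd

section Final

lemma exists_altProd {A H : Type} [Group A] [Group H] (r : Coprod A H) :
    ∃ L : List (A × H), r = altProd Coprod.inl Coprod.inr L := by
  induction r using Coprod.induction_on with
  | inl a => exact ⟨[(a, 1)], by simp⟩
  | inr h => exact ⟨[(1, h)], by simp⟩
  | mul x y hx hy =>
    obtain ⟨L1, h1⟩ := hx
    obtain ⟨L2, h2⟩ := hy
    exact ⟨L1 ++ L2, by rw [altProd_append, h1, h2]⟩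

lemma isConj_mul_comm {G : Type} [Group G] (a b : G) : IsConj (a * b) (b * a) :=
  isConj_iff.2 ⟨b, by group⟩

lemma cyc_normal {A H : Type} [Group A] [Group H] (n : ℕ) : ∀ (L : List (A × H)), L.length ≤ n →
    ∀ r, IsConj (altProd Coprod.inl Coprod.inr L) r →
    (∃ a : A, IsConj (Coprod.inl a) r) ∨ (∃ h : H, IsConj (Coprod.inr h) r) ∨
    ∃ L : List (A × H), (∀ x ∈ L, x.1 ≠ 1 ∧ x.2 ≠ 1) ∧ IsConj (altProd Coprod.inl Coprod.inr L) r := by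
  induction n with
  | zero =>
    intro L hL r hr
    have : L = [] := List.length_eq_zero_iff.1 (by omega)
    subst this
    exact Or.inl ⟨1, by simpa using hr⟩
  | succ n ih =>
    intro L hL r hr
    by_cases hall : ∀ x ∈ L, x.1 ≠ 1 ∧ x.2 ≠ 1
    · exact Or.inr (Or.inr ⟨L, hall, hr⟩)
    obtain ⟨x, hx, hx'⟩ : ∃ x ∈ L, x.1 = 1 ∨ x.2 = 1 := by
      by_contra hcon
      apply hall
      intro x hx
      push Not at hcon
      exact hcon x hx
    obtain ⟨P, Q, hPQ⟩ := List.append_of_mem hx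
    have hlen : (Q ++ P).length ≤ n := by
      rw [hPQ] at hL
      simp only [List.length_append, List.length_cons] at hL ⊢
      omega
    have hr2 : IsConj (Coprod.inl x.1 * Coprod.inr x.2 * altProd Coprod.inl Coprod.inr (Q ++ P)) r := by
      refine IsConj.trans ?_ hr
      rw [hPQ, altProd_append, altProd_append, altProd_cons]
      have := isConj_mul_comm (Coprod.inl x.1 * Coprod.inr x.2 * altProd Coprod.inl Coprod.inr Q)
        (altProd (Coprod.inl : A →* Coprod A H) Coprod.inr P)
      rw [mul_assoc (Coprod.inl x.1 * Coprod.inr x.2)] at this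
      rw [← mul_assoc] at this ⊢
      convert this using 1
    generalize hT : Q ++ P = T at hlen hr2
    rcases hx' with h1 | h2
    · rw [h1, map_one, one_mul] at hr2
      rcases List.eq_nil_or_concat T with h | ⟨R, y, h⟩
      · subst h
        exact Or.inr (Or.inl ⟨x.2, by simpa using hr2⟩)
      · subst h
        apply ih (R ++ [(y.1, y.2 * x.2)]) (by simpa using hlen) r
        refine IsConj.trans ?_ hr2
        have := isConj_mul_comm (altProd Coprod.inl Coprod.inr (R.concat y)) (Coprod.inr x.2 : Coprod A H)
        rw [List.concat_eq_append, altProd_append] at this ⊢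
        rw [altProd_append]
        simpa [mul_assoc] using this
    · rw [h2, map_one, mul_one] at hr2
      cases T with
      | nil => exact Or.inl ⟨x.1, by simpa using hr2⟩
      | cons y R =>
        apply ih ((x.1 * y.1, y.2) :: R) (by simpa using hlen) r
        simpa [mul_assoc] using hr2

end Final

/-- **Lemma.** Let `H` be locally indicable, `A` free with basis `𝒜`, and
`p = v⁻¹gv` where `v, g` use disjoint sets of basis letters, `g` cyclically reduced
and not a proper power. If `r ∈ A ∗ H` is not conjugate into `A`, `H` or `⟨p⟩ ∗ H`,
then `⟨p⟩ ∗ H` embeds canonically into `(A ∗ H)/⟨⟨r⟩⟩`. -/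
theorem embed_cyclic_times_H {α H : Type} [DecidableEq α] [Group H]
    (hH : LocallyIndicable H)
    (v g : FreeGroup α)
    (hdisj : ∀ x : α, x ∈ lettersOf v → x ∉ lettersOf g)
    (hcr : CyclicallyReduced g)
    (hnp : ∀ (s : FreeGroup α) (k : ℕ), 2 ≤ k → g ≠ s ^ k)
    (r : Coprod (FreeGroup α) H)
    (hrA : ¬ ∃ a : FreeGroup α, IsConj (Coprod.inl a) r)
    (hrH : ¬ ∃ h : H, IsConj (Coprod.inr h) r)
    (hrS : ¬ ∃ s ∈ Subgroup.closure
        ({Coprod.inl (v⁻¹ * g * v)} ∪ Set.range (Coprod.inr : H →* Coprod (FreeGroup α) H) :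
          Set (Coprod (FreeGroup α) H)), IsConj s r) :
    Set.InjOn (QuotientGroup.mk' (Subgroup.normalClosure {r}))
      (Subgroup.closure
        ({Coprod.inl (v⁻¹ * g * v)} ∪ Set.range (Coprod.inr : H →* Coprod (FreeGroup α) H) :
          Set (Coprod (FreeGroup α) H))) := by
  obtain ⟨p, hp⟩ : ∃ p, p = v⁻¹ * g * v := ⟨_, rfl⟩
  rw [← hp] at hrS ⊢
  have hpp : ∀ (s : FreeGroup α) (k : ℕ), 2 ≤ k → p ≠ s ^ k := by
    intro s k hk h
    apply hnp (v * s * v⁻¹) k hk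
    rw [conj_pow, ← h, hp]
    group
  obtain ⟨L0, hL0⟩ := exists_altProd r
  obtain ⟨L, hL, hLr⟩ := ((cyc_normal _ L0 le_rfl r (by rw [hL0])).resolve_left hrA).resolve_left hrH
  have hx : ∃ x ∈ L, x.1 ∉ Subgroup.zpowers p := by
    by_contra hcon
    push Not at hcon
    apply hrS
    refine ⟨_, ?_, hLr⟩
    clear hLr hL
    induction L with
    | nil => exact Subgroup.one_mem _
    | cons x L ih =>
      rw [altProd_cons]
      refine Subgroup.mul_mem _ (Subgroup.mul_mem _ ?_ ?_) (ih (fun y hy => hcon y (List.mem_cons_of_mem _ hy)))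
      · obtain ⟨c, hc⟩ := hcon x List.mem_cons_self
        rw [← hc]
        beta_reduce
        rw [map_zpow]
        refine Subgroup.zpow_mem _ (Subgroup.subset_closure ?_) _
        exact Or.inl (Set.mem_singleton _)
      · exact Subgroup.subset_closure (Or.inr ⟨x.2, rfl⟩)
  obtain ⟨Γ, _, al, η, hrel, hinj⟩ := main_ind _ (FreeGroup α) H α (MonoidHom.id (FreeGroup α))
    (fun _ _ h => h) hH
    p hpp L hL hx le_rfl
  obtain ⟨φ, hφ⟩ : ∃ φ : Coprod (FreeGroup α) H →* Γ, φ = Coprod.lift al η := ⟨_, rfl⟩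
  have hφr : φ r = 1 := by
    have h1 : φ (altProd Coprod.inl Coprod.inr L) = 1 := by
      rw [map_altProd, hφ, Coprod.lift_comp_inl, Coprod.lift_comp_inr, hrel]
    obtain ⟨c, hc⟩ := isConj_iff.1 hLr
    rw [← hc, map_mul, map_mul, h1]
    simp
  have hker : Subgroup.normalClosure {r} ≤ φ.ker := by
    apply Subgroup.normalClosure_le_normal
    intro y hy
    rw [Set.mem_singleton_iff.1 hy]
    exact hφr
  obtain ⟨ψ, hψ⟩ : ∃ ψ : Coprod (Multiplicative ℤ) H →* Coprod (FreeGroup α) H,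
    ψ = Coprod.lift (zpowersHom _ (Coprod.inl p)) Coprod.inr := ⟨_, rfl⟩
  have hψr : Subgroup.closure
        ({Coprod.inl p} ∪ Set.range (Coprod.inr : H →* Coprod (FreeGroup α) H) :
          Set (Coprod (FreeGroup α) H)) ≤ ψ.range := by
    rw [Subgroup.closure_le]
    rintro y (hy | ⟨h, rfl⟩)
    · rw [Set.mem_singleton_iff.1 hy]
      refine ⟨Coprod.inl (Multiplicative.ofAdd 1), ?_⟩
      rw [hψ, Coprod.lift_apply_inl, zpowersHom_apply]
      simp
    · exact ⟨Coprod.inr h, by rw [hψ, Coprod.lift_apply_inr]⟩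
  have hcomp : φ.comp ψ = Coprod.lift (zpowersHom Γ (al p)) η := by
    rw [hφ, hψ]
    apply Coprod.hom_ext
    · refine MonoidHom.ext fun n => ?_
      simp [zpowersHom_apply]
    · refine MonoidHom.ext fun n => ?_
      simp
  intro x hx y hy hxy
  obtain ⟨x', rfl⟩ := hψr hx
  obtain ⟨y', rfl⟩ := hψr hy
  have h1 := hker (QuotientGroup.eq.1 hxy)
  rw [MonoidHom.mem_ker, map_mul, map_inv, inv_mul_eq_one] at h1
  have h2 : (φ.comp ψ) x' = (φ.comp ψ) y' := h1
  rw [hcomp] at h2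
  rw [hinj h2]
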